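/- arXiv:1708.03876 — 2 statements merged into one kernel-verified Lean document; each statement's English description precedes it below -/
import Mathlib

section
/- Let a be a ribbon with signature σ = σ(a). Then every extension f of a has at least 1 − σ/2 points in the open unit disk that are local extrema (local maxima or local minima) of f. -/
open scoped RealInnerProductSpace

noncomputable section

abbrev E2 : Type := EuclideanSpace ℝ (Fin 2)

/-- The point (cos t, sin t) on the unit circle in ℝ². -/
def sphPt (t : ℝ) : E2 := (EuclideanSpace.equiv (Fin 2) ℝ).symm ![Real.cos t, Real.sin t]

/-- A ribbon with `n` nodes, encoded via the angle parametrization `g = φ ∘ (cos, sin)`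
of a C^∞ function `φ : S¹ → ℝ` whose critical points on the circle are exactly the `n`
nondegenerate local extrema (nodes) at angles `θ 0 < θ 1 < ⋯ < θ (n-1)` in `[0, 2π)`,
with pairwise distinct critical values, together with a marking `ν` of the nodes by `±1`. -/
structure Ribbon (n : ℕ) : Type where
  g : ℝ → ℝ
  θ : Fin n → ℝ
  ν : Fin n → ℤ
  n_even : Even n
  n_pos : 0 < n
  smooth_g : ContDiff ℝ (⊤ : ℕ∞) g
  periodic_g : Function.Periodic g (2 * Real.pi)
  theta_mem : ∀ i, θ i ∈ Set.Ico (0 : ℝ) (2 * Real.pi)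
  theta_mono : StrictMono θ
  node_crit : ∀ i, deriv g (θ i) = 0
  node_nondeg : ∀ i, deriv (deriv g) (θ i) ≠ 0
  crit_only : ∀ t ∈ Set.Ico (0 : ℝ) (2 * Real.pi), deriv g t = 0 → ∃ i, t = θ i
  values_distinct : ∀ i j, g (θ i) = g (θ j) → i = j
  nu_sign : ∀ i, ν i = 1 ∨ ν i = -1

/-- The signature σ = s₊ − s₋ of a ribbon. -/
def Ribbon.sigma {n : ℕ} (a : Ribbon n) : ℤ := ∑ i, a.ν i

/-- Critical points of `f` in the open unit disk. -/
def critPts (f : E2 → ℝ) : Set E2 :=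
  {x | x ∈ Metric.ball (0 : E2) 1 ∧ fderiv ℝ f x = 0}

/-- `f : ℝ² → ℝ` is an extension of the ribbon `a`: it is C^∞, agrees with `φ` on the unit
circle, has nowhere-vanishing gradient on the circle, and at each node the radial derivative
`⟪∇f(p), p⟫` has sign `ν p` if `p` is a local maximum of `φ` (second derivative of `g`
negative there) and sign `−ν p` if `p` is a local minimum of `φ`. -/
def IsExtension {n : ℕ} (a : Ribbon n) (f : E2 → ℝ) : Prop :=
  ContDiff ℝ (⊤ : ℕ∞) f ∧
  (∀ t : ℝ, f (sphPt t) = a.g t) ∧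
  (∀ x ∈ Metric.sphere (0 : E2) 1, fderiv ℝ f x ≠ 0) ∧
  (∀ i : Fin n,
    (deriv (deriv a.g) (a.θ i) < 0 →
      0 < (a.ν i : ℝ) * ⟪gradient f (sphPt (a.θ i)), sphPt (a.θ i)⟫) ∧
    (0 < deriv (deriv a.g) (a.θ i) →
      (a.ν i : ℝ) * ⟪gradient f (sphPt (a.θ i)), sphPt (a.θ i)⟫ < 0))

/-- The ribbon invariant γ: the infimum, over all extensions `f` of `a`, of the number of
critical points of `f` in the open unit disk (a value in `ℕ∞`). -/
def gammaR {n : ℕ} (a : Ribbon n) : ℕ∞ :=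
  sInf {k : ℕ∞ | ∃ f : E2 → ℝ, IsExtension a f ∧ (critPts f).encard = k}

/-!
Count local maxima and minima in the closed disk, where those on the bounding circle are exactly
the positive nodes. Let `p` be a negative node that is a minimum on the circle, and let `c = f p`,
so that `f` decreases from `p` into the disk. Just above the level `c`, the two sides of `p` on the
circle are either in different components of `{f > c}`, which merge at `c`, or joined by a path in
`{f > c}`. In the first case a local maximum dies at `c` by the elder rule. In the second case the
path cuts off from the rest of the circle a component of `{f < c}` adjacent to `p`, which contains
an interior local minimum of its own. One local maximum never dies, so that the number of negative
minima plus one is at most the number of interior extrema plus the number of positive maxima.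
Adding the same inequality for `-f` gives `s₋ + 2 ≤ 2 E + s₊`, with `E` the number of interior
extrema.
-/

open Set Filter Topology
open scoped Real

section Topology

variable {X : Type*} [TopologicalSpace X] {f : X → ℝ} {c c' : ℝ} {x y m : X}

/-- `f x` is strictly smaller than all values of `f` at nearby points other than `x`. -/
def IsStrictLocalMin (f : X → ℝ) (x : X) : Prop := ∀ᶠ y in 𝓝[≠] x, f x < f y

/-- `f x` is strictly larger than all values of `f` at nearby points other than `x`. -/
def IsStrictLocalMax (f : X → ℝ) (x : X) : Prop := ∀ᶠ y in 𝓝[≠] x, f y < f x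

theorem isStrictLocalMin_neg_iff :
    IsStrictLocalMin (fun y => -f y) x ↔ IsStrictLocalMax f x := by
  simp only [IsStrictLocalMin, IsStrictLocalMax, neg_lt_neg_iff]

theorem isStrictLocalMax_neg_iff :
    IsStrictLocalMax (fun y => -f y) x ↔ IsStrictLocalMin f x := by
  simp only [IsStrictLocalMin, IsStrictLocalMax, neg_lt_neg_iff]

theorem isLocalExtr_neg_iff : IsLocalExtr (fun y => -f y) x ↔ IsLocalExtr f x :=
  ⟨fun h => by simpa only [neg_neg] using h.neg, IsLocalExtr.neg⟩

theorem IsStrictLocalMin.not_isLocalMax [(𝓝[≠] x).NeBot] (h : IsStrictLocalMin f x) :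
    ¬IsLocalMax f x := fun hmax =>
  let ⟨_, hlt, hle⟩ := (h.and (hmax.filter_mono nhdsWithin_le_nhds)).exists
  hlt.not_ge hle

theorem IsStrictLocalMin.not_isStrictLocalMax [(𝓝[≠] x).NeBot] (h : IsStrictLocalMin f x) :
    ¬IsStrictLocalMax f x := fun hmax =>
  let ⟨_, hlt, hgt⟩ := (h.and hmax).exists
  hlt.asymm hgt

theorem joinedIn_superlevel_mono (hc : c' ≤ c) (h : JoinedIn {z | c < f z} x y) :
    JoinedIn {z | c' < f z} x y :=
  h.mono fun _ hz => hc.trans_lt hz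

section Compact

variable [CompactSpace X] [LocallyPathConnectedSpace X]

theorem exists_isLocalMax_joinedIn (hf : Continuous f) (hx : c < f x) :
    ∃ m, IsLocalMax f m ∧ JoinedIn {z | c < f z} x m := by
  have hopen : IsOpen {z | c < f z} := isOpen_lt continuous_const hf
  obtain ⟨m, hm, hmax⟩ := (isClosed_closure (s := pathComponentIn {z | c < f z} x)).isCompact
    |>.exists_isMaxOn ⟨x, subset_closure (mem_pathComponentIn_self hx)⟩ hf.continuousOn
  have hcm : c < f m := hx.trans_le (hmax (subset_closure (mem_pathComponentIn_self hx)))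
  obtain ⟨y, hmy, hxy⟩ := mem_closure_iff.1 hm _ (hopen.pathComponentIn m)
    (mem_pathComponentIn_self hcm)
  have hxm : JoinedIn {z | c < f z} x m := hxy.trans hmy.symm
  exact ⟨m, mem_of_superset ((hopen.pathComponentIn x).mem_nhds hxm)
    fun z hz => hmax (subset_closure hz), hxm⟩

theorem exists_isLocalMin_joinedIn (hf : Continuous f) (hx : f x < c) :
    ∃ m, IsLocalMin f m ∧ JoinedIn {z | f z < c} x m := by
  obtain ⟨m, hm, hxm⟩ := exists_isLocalMax_joinedIn (f := fun z => -f z) hf.neg (neg_lt_neg hx)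
  exact ⟨m, by simpa only [neg_neg] using hm.neg, by simpa only [neg_lt_neg_iff] using hxm⟩

end Compact

/-- Two path components of `{f > c}` are joined in `{f > c'}` for every `c' < c`: as the level
decreases, they merge at `c`. -/
def IsMergeLevel (f : X → ℝ) (c : ℝ) : Prop :=
  ∃ x y, c < f x ∧ c < f y ∧ ¬JoinedIn {z | c < f z} x y ∧ ∀ c' < c, JoinedIn {z | c' < f z} x y

/-- Relative to a ranking `r` of the local maxima, `m` is the highest ranked local maximum of its
path component in `{f > c}`. -/
structure IsEldest (f : X → ℝ) (r : X → ℕ) (c : ℝ) (m : X) : Prop where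
  isLocalMax : IsLocalMax f m
  rank_le : ∀ ⦃m'⦄, IsLocalMax f m' → JoinedIn {z | c < f z} m m' → r m' ≤ r m

/-- The local maximum `m` is the eldest of its component in `{f > c}`, and no longer so at any
lower level, where that component contains a local maximum of higher rank. -/
structure DiesAt (f : X → ℝ) (r : X → ℕ) (m : X) (c : ℝ) : Prop extends IsEldest f r c m where
  exists_rank_lt : ∃ m', IsLocalMax f m' ∧ r m < r m' ∧ ∀ c' < c, JoinedIn {z | c' < f z} m m'

variable {r : X → ℕ}

theorem DiesAt.level_le (hc : DiesAt f r m c) (hc' : DiesAt f r m c') : c ≤ c' := by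
  by_contra! hlt
  obtain ⟨m', hm', hrank, hjoin⟩ := hc.exists_rank_lt
  exact hrank.not_ge (hc'.rank_le hm' (hjoin c' hlt))

section Compact

variable [CompactSpace X] [LocallyPathConnectedSpace X]

theorem exists_isEldest_joinedIn (hf : Continuous f) (hfin : {x | IsLocalMax f x}.Finite)
    (r : X → ℕ) (hx : c < f x) : ∃ m, IsEldest f r c m ∧ JoinedIn {z | c < f z} x m := by
  obtain ⟨m₀, hm₀⟩ := exists_isLocalMax_joinedIn hf hx
  obtain ⟨m, ⟨hm, hxm⟩, hrank⟩ :=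
    exists_max_image {m | IsLocalMax f m ∧ JoinedIn {z | c < f z} x m} r
      (hfin.subset fun _ h => h.1) ⟨m₀, hm₀⟩
  exact ⟨m, ⟨hm, fun m' hm' hmm' => hrank m' ⟨hm', hxm.trans hmm'⟩⟩, hxm⟩

theorem IsMergeLevel.exists_diesAt (hf : Continuous f) (hfin : {x | IsLocalMax f x}.Finite)
    (hr : InjOn r {x | IsLocalMax f x}) (h : IsMergeLevel f c) : ∃ m, DiesAt f r m c := by
  obtain ⟨x, y, hx, hy, hsep, hmerge⟩ := h
  obtain ⟨m, hm, hxm⟩ := exists_isEldest_joinedIn hf hfin r hx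
  obtain ⟨m', hm', hym'⟩ := exists_isEldest_joinedIn hf hfin r hy
  have hjoin : ∀ c' < c, JoinedIn {z | c' < f z} m m' := fun c' hc' =>
    ((joinedIn_superlevel_mono hc'.le hxm).symm.trans (hmerge c' hc')).trans
      (joinedIn_superlevel_mono hc'.le hym')
  have hne : r m ≠ r m' := fun heq =>
    hsep (hxm.trans (hr hm.isLocalMax hm'.isLocalMax heq ▸ hym'.symm))
  rcases hne.lt_or_gt with hlt | hlt
  · exact ⟨m, hm, m', hm'.isLocalMax, hlt, hjoin⟩
  · exact ⟨m', hm', m, hm.isLocalMax, hlt, fun c' hc' => (hjoin c' hc').symm⟩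

/-- The elder rule: at each merge level a local maximum dies, and the eldest one never does. -/
theorem encard_isMergeLevel_add_one_le [Nonempty X] (hf : Continuous f) :
    {c | IsMergeLevel f c}.encard + 1 ≤ {x | IsLocalMax f x}.encard := by
  rcases {x | IsLocalMax f x}.finite_or_infinite with hfin | hinf
  swap
  · simp only [hinf.encard_eq, le_top]
  obtain ⟨r, hr⟩ := countable_iff_exists_injOn.1 hfin.countable
  have hne : {x | IsLocalMax f x}.Nonempty := by
    obtain ⟨m, hm, -⟩ := exists_isLocalMax_joinedIn hf (sub_one_lt (f (Classical.arbitrary X)))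
    exact ⟨m, hm⟩
  obtain ⟨top, htop, hrank⟩ := exists_max_image _ r hfin hne
  have hdies : ∀ c, IsMergeLevel f c → ∃ m, DiesAt f r m c := fun _ =>
    IsMergeLevel.exists_diesAt hf hfin hr
  choose! victim hvictim using hdies
  rw [← encard_sdiff_singleton_add_one htop]
  gcongr
  refine encard_le_encard_of_injOn (f := victim) (fun c hc => ?_) fun c hc c' hc' heq => ?_
  · obtain ⟨m', hm', hlt, -⟩ := (hvictim c hc).exists_rank_lt
    exact ⟨(hvictim c hc).isLocalMax, fun h => (h ▸ hlt).not_ge (hrank m' hm')⟩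
  · have hc'_dies : DiesAt f r (victim c) c' := heq ▸ hvictim c' hc'
    exact le_antisymm ((hvictim c hc).level_le hc'_dies) (hc'_dies.level_le (hvictim c hc))

end Compact

/-- From some point of `B` one can move within `{f ≤ c}` into a path component of `{f < c}` that
does not meet `B`. -/
def IsEnclosedLevel (f : X → ℝ) (B : Set X) (c : ℝ) : Prop :=
  ∃ p ∈ B, ∃ y, f y < c ∧ JoinedIn {z | f z ≤ c} p y ∧ ∀ q ∈ B, ¬JoinedIn {z | f z < c} y q

theorem encard_isEnclosedLevel_le [CompactSpace X] [LocallyPathConnectedSpace X]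
    (hf : Continuous f) (B : Set X) :
    {c | IsEnclosedLevel f B c}.encard ≤ {x | x ∉ B ∧ IsLocalMin f x}.encard := by
  rcases isEmpty_or_nonempty X with _ | _
  · simp only [IsEnclosedLevel, IsEmpty.exists_iff, and_false, ofPred_false, encard_empty, zero_le]
  have hmin : ∀ c, IsEnclosedLevel f B c → ∃ m, IsLocalMin f m ∧ f m < c ∧
      (∃ p ∈ B, JoinedIn {z | f z ≤ c} p m) ∧ ∀ q ∈ B, ¬JoinedIn {z | f z < c} m q := by
    rintro c ⟨p, hp, y, hy, hpy, havoid⟩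
    obtain ⟨m, hm, hym⟩ := exists_isLocalMin_joinedIn hf hy
    exact ⟨m, hm, hym.target_mem, ⟨p, hp, hpy.trans (hym.mono fun z (hz : f z < c) => hz.le)⟩,
      fun q hq hmq => havoid q hq (hym.trans hmq)⟩
  choose! m hm hlt hreach havoid using hmin
  have hlevel : ∀ {c c' : ℝ}, IsEnclosedLevel f B c → IsEnclosedLevel f B c' → m c = m c' →
      c' ≤ c := by
    intro c c' hc hc' heq
    by_contra! hcc'
    obtain ⟨p, hp, hpm⟩ := hreach c hc
    exact havoid c' hc' p hp (heq ▸ (hpm.mono fun _ hz => lt_of_le_of_lt hz hcc').symm)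
  exact encard_le_encard_of_injOn
    (fun c hc => ⟨fun hB => havoid c hc _ hB (JoinedIn.refl (hlt c hc)), hm c hc⟩)
    fun c hc c' hc' heq => le_antisymm (hlevel hc' hc heq.symm) (hlevel hc hc' heq)

theorem encard_isLocalMax_add_encard_isLocalMin_le [T1Space X] [∀ x : X, (𝓝[≠] x).NeBot]
    {B : Set X} (hB : IsClosed B) :
    {x | x ∉ B ∧ IsLocalMax f x}.encard + {x | x ∉ B ∧ IsLocalMin f x}.encard ≤
      {x | x ∉ B ∧ IsLocalExtr f x}.encard := by
  rcases {x | x ∉ B ∧ IsLocalExtr f x}.finite_or_infinite with hfin | hinf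
  swap
  · simp only [hinf.encard_eq, le_top]
  have hdisj : Disjoint {x | x ∉ B ∧ IsLocalMax f x} {x | x ∉ B ∧ IsLocalMin f x} := by
    refine Set.disjoint_left.2 fun x ⟨hx, hmax⟩ ⟨_, hmin⟩ => infinite_of_mem_nhds x ?_ hfin
    have hconst : ∀ᶠ y in 𝓝 x, f y = f x := (hmax.and hmin).mono fun _ h => le_antisymm h.1 h.2
    filter_upwards [hconst.eventually_nhds, hB.isOpen_compl.mem_nhds hx] with y hy hyB
    exact ⟨hyB, .inr (hy.mono fun z hz => (hz.trans hy.self_of_nhds.symm).le)⟩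
  rw [← encard_union_eq hdisj]
  exact encard_le_encard (union_subset (fun x h => ⟨h.1, .inr h.2⟩) fun x h => ⟨h.1, .inl h.2⟩)

end Topology

section Crossing

open Complex

theorem one_sub_mem_slitPlane {z : ℂ} (hz : ‖z‖ ≤ 1) (hz1 : z ≠ 1) : 1 - z ∈ slitPlane := by
  rw [mem_slitPlane_iff]
  by_contra! h
  simp only [sub_re, one_re, sub_im, one_im, zero_sub, neg_eq_zero] at h
  exact hz1 (Complex.ext (le_antisymm ((re_le_norm z).trans hz) (sub_nonpos.1 h.1)) h.2)

theorem arg_one_sub_exp_mul_I {t : ℝ} (ht : t ∈ Ioo 0 (2 * π)) :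
    arg (1 - exp (t * I)) = (t - π) / 2 := by
  have hpolar : 1 - exp (t * I) = (2 * Real.sin (t / 2) : ℝ) *
      (Real.cos ((t - π) / 2) + Real.sin ((t - π) / 2) * I) := by
    rw [sub_div, Real.cos_sub_pi_div_two, Real.sin_sub_pi_div_two, exp_mul_I]
    obtain ⟨s, rfl⟩ : ∃ s, t = 2 * s := ⟨t / 2, by ring⟩
    push_cast
    rw [mul_div_cancel_left₀ _ two_ne_zero, cos_two_mul, sin_two_mul, cos_sq']
    ring
  rw [hpolar, ofReal_cos, ofReal_sin, arg_mul_cos_add_sin_mul_I]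
  · have := Real.sin_pos_of_pos_of_lt_pi (x := t / 2) (by linarith [ht.1]) (by linarith [ht.2])
    positivity
  · constructor <;> linarith [ht.1, ht.2]

theorem sub_eq_sub_of_exp_eq {L M : ℝ → ℂ} (hL : Continuous L) (hM : Continuous M) {w : ℂ}
    (hexp : ∀ s, exp (L s) = w * exp (M s)) (s t : ℝ) : L s - L t = M s - M t := by
  have hlift : L = fun s => M s + (L t - M t) := by
    refine isCoveringMap_exp.eq_of_comp_eq hL (hM.add continuous_const) (funext fun s => ?_) t
      (add_sub_cancel _ _).symm
    apply Subtype.ext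
    simp only [Function.comp_apply, exp_add, exp_sub, hexp]
    field_simp [exp_ne_zero]
  rw [congrFun hlift s]
  ring

/-- The inscribed angle theorem, seen from the point `exp (u * I)` of the circle. -/
theorem im_sub_im_of_exp_eq {L γ : ℝ → ℂ} (hL : Continuous L) (hγ : Continuous γ) {w : ℂ}
    {u a b : ℝ} (hγ1 : ∀ s, ‖γ s‖ ≤ 1) (hexp : ∀ s, exp (L s) = w * (exp (u * I) - γ s))
    (ha : γ 0 = exp (a * I)) (hb : γ 1 = exp (b * I))
    (hau : a ∈ Ioo u (u + 2 * π)) (hbu : b ∈ Ioo u (u + 2 * π)) :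
    (L 1).im - (L 0).im = (b - a) / 2 := by
  have hrot : ∀ s, exp (u * I) - γ s = exp (u * I) * (1 - γ s * exp (-(u * I))) := fun s => by
    rw [exp_neg]
    field_simp [exp_ne_zero]
  have hslit : ∀ s, 1 - γ s * exp (-(u * I)) ∈ slitPlane := fun s => by
    refine one_sub_mem_slitPlane ?_ fun h => ?_
    · simpa only [norm_mul, ← neg_mul, ← ofReal_neg, norm_exp_ofReal_mul_I, mul_one] using hγ1 s
    · exact exp_ne_zero (L s) (by rw [hexp, hrot, h, sub_self, mul_zero, mul_zero])
  have harg : ∀ {s t : ℝ}, γ s = exp (t * I) → t ∈ Ioo u (u + 2 * π) →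
      (log (1 - γ s * exp (-(u * I)))).im = (t - u - π) / 2 := fun hs ht => by
    rw [log_im, hs, ← exp_add, ← neg_mul, ← add_mul, ← ofReal_neg, ← ofReal_add,
      ← sub_eq_add_neg, arg_one_sub_exp_mul_I ⟨by linarith [ht.1], by linarith [ht.2]⟩]
  have hlog := sub_eq_sub_of_exp_eq (M := fun s => log (1 - γ s * exp (-(u * I)))) hL
    (Continuous.clog (by fun_prop) hslit) (w := w * exp (u * I))
    (fun s => by rw [hexp, hrot, exp_log (slitPlane_ne_zero (hslit s)), mul_assoc]) 1 0
  rw [← sub_im, hlog, sub_im, harg hb hbu, harg ha hau]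
  ring

theorem exp_ofReal_add_two_pi_mul_I (t : ℝ) :
    exp ((t + 2 * π : ℝ) * I) = exp (t * I) := by
  push_cast
  exact exp_mul_I_periodic t

theorem exp_ofReal_sub_two_pi_mul_I (t : ℝ) :
    exp ((t - 2 * π : ℝ) * I) = exp (t * I) := by
  rw [← exp_ofReal_add_two_pi_mul_I, sub_add_cancel]

theorem exists_exp_eq_sub {α β : ℝ → ℂ} (hα : Continuous α) (hβ : Continuous β)
    (hne : ∀ s t, α s ≠ β t) :
    ∃ L : ℝ × ℝ → ℂ, Continuous L ∧ ∀ s t, exp (L (s, t)) = α s - β t := by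
  have := (convex_univ (𝕜 := ℝ) (E := ℝ × ℝ)).contractibleSpace univ_nonempty
  have hsc : IsSimplyConnected (univ : Set (ℝ × ℝ)) :=
    inferInstanceAs (SimplyConnectedSpace (univ : Set (ℝ × ℝ)))
  obtain ⟨L, hL, hexp⟩ := exists_continuousOn_eqOn_exp_comp (g := fun x : ℝ × ℝ => α x.1 - β x.2)
    hsc isOpen_univ (by fun_prop) fun ⟨x, _, hx⟩ => hne _ _ (sub_eq_zero.1 hx)
  exact ⟨L, continuousOn_univ.1 hL, fun s t => hexp (mem_univ (s, t))⟩

/-- If the two paths were disjoint, the turning of `α s - β t` around the boundary of the square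
`0 ≤ s, t ≤ 1`, read off on each edge from the inscribed angle, would be `-2π` instead of `0`. -/
theorem exists_eq_of_interleaved {α β : ℝ → ℂ} (hα : Continuous α) (hβ : Continuous β)
    (hα1 : ∀ s, ‖α s‖ ≤ 1) (hβ1 : ∀ t, ‖β t‖ ≤ 1) {a₀ b₀ a₁ b₁ : ℝ}
    (h₁ : a₀ < b₀) (h₂ : b₀ < a₁) (h₃ : a₁ < b₁) (h₄ : b₁ < a₀ + 2 * π)
    (ha₀ : α 0 = exp (a₀ * I)) (ha₁ : α 1 = exp (a₁ * I))
    (hb₀ : β 0 = exp (b₀ * I)) (hb₁ : β 1 = exp (b₁ * I)) : ∃ s t, α s = β t := by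
  by_contra! hne
  obtain ⟨L, hL, hexp⟩ := exists_exp_eq_sub hα hβ hne
  have hbottom : (L (1, 0)).im - (L (0, 0)).im = (a₁ - (a₀ + 2 * π)) / 2 :=
    im_sub_im_of_exp_eq (L := fun s => L (s, 0)) (w := -1) (u := b₀) (by fun_prop) hα hα1
      (fun s => by rw [hexp, hb₀]; ring) (by rw [ha₀, exp_ofReal_add_two_pi_mul_I]) ha₁
      ⟨by linarith, by linarith⟩ ⟨by linarith, by linarith⟩
  have htop : (L (1, 1)).im - (L (0, 1)).im = (a₁ - a₀) / 2 :=
    im_sub_im_of_exp_eq (L := fun s => L (s, 1)) (w := -1) (u := b₁ - 2 * π)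
      (by fun_prop) hα hα1
      (fun s => by rw [hexp, hb₁, exp_ofReal_sub_two_pi_mul_I]; ring) ha₀ ha₁
      ⟨by linarith, by linarith⟩ ⟨by linarith, by linarith⟩
  have hleft : (L (0, 1)).im - (L (0, 0)).im = (b₁ - b₀) / 2 :=
    im_sub_im_of_exp_eq (L := fun t => L (0, t)) (w := 1) (u := a₀) (by fun_prop) hβ hβ1
      (fun t => by rw [hexp, ha₀, one_mul]) hb₀ hb₁
      ⟨by linarith, by linarith⟩ ⟨by linarith, by linarith⟩
  have hright : (L (1, 1)).im - (L (1, 0)).im = (b₁ - (b₀ + 2 * π)) / 2 :=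
    im_sub_im_of_exp_eq (L := fun t => L (1, t)) (w := 1) (u := a₁) (by fun_prop) hβ hβ1
      (fun t => by rw [hexp, ha₁, one_mul]) (by rw [hb₀, exp_ofReal_add_two_pi_mul_I]) hb₁
      ⟨by linarith, by linarith⟩ ⟨by linarith, by linarith⟩
  linarith [Real.pi_pos]

end Crossing

theorem norm_sphPt (t : ℝ) : ‖sphPt t‖ = 1 := by
  simp [sphPt, EuclideanSpace.norm_eq]

theorem continuous_sphPt : Continuous sphPt := by
  unfold sphPt
  fun_prop

/-- The closed unit disk, as a space in its own right: local extrema of a function on `Disk` at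
points of the rim are one-sided, only points of the disk being compared. -/
abbrev Disk : Type := Metric.closedBall (0 : E2) 1

namespace Disk

open unitInterval

instance : CompactSpace Disk := isCompact_iff_compactSpace.1 (isCompact_closedBall _ _)

instance : LocallyPathConnectedSpace Disk := (convex_closedBall _ _).locallyPathConnectedSpace

instance : PathConnectedSpace Disk := isPathConnected_iff_pathConnectedSpace.1
  ((convex_closedBall _ _).isPathConnected (Metric.nonempty_closedBall.2 zero_le_one))

instance : LocallyPathConnectedSpace I := (convex_Icc _ _).locallyPathConnectedSpace

/-- The point of the disk with polar coordinates `(r, t)`. -/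
def polar (r : I) (t : ℝ) : Disk :=
  ⟨(r : ℝ) • sphPt t, by
    rw [mem_closedBall_zero_iff, norm_smul, norm_sphPt, mul_one, Real.norm_of_nonneg r.2.1]
    exact r.2.2⟩

theorem continuous_polar_left (t : ℝ) : Continuous fun r => polar r t := by
  unfold polar
  fun_prop

/-- The point of the bounding circle at angle `t`. -/
def rimPt (t : ℝ) : Disk := polar 1 t

@[simp]
theorem coe_rimPt (t : ℝ) : (rimPt t : E2) = sphPt t := one_smul ℝ (sphPt t)

theorem continuous_rimPt : Continuous rimPt := by
  have := continuous_sphPt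
  unfold rimPt polar
  fun_prop

theorem rimPt_periodic : Function.Periodic rimPt (2 * π) := fun t => by
  simp only [rimPt, polar, sphPt, Real.cos_add_two_pi, Real.sin_add_two_pi]

/-- The bounding circle of the disk. -/
def rim : Set Disk := {z | ‖(z : E2)‖ = 1}

theorem rimPt_mem_rim (t : ℝ) : rimPt t ∈ rim := by
  change ‖(rimPt t : E2)‖ = 1
  rw [coe_rimPt, norm_sphPt]

theorem notMem_rim_iff {z : Disk} : z ∉ rim ↔ (z : E2) ∈ Metric.ball 0 1 := by
  rw [mem_ball_zero_iff]
  exact ⟨fun h => lt_of_le_of_ne (mem_closedBall_zero_iff.1 z.2) h, fun h => h.ne⟩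

theorem isClosed_rim : IsClosed rim :=
  isClosed_eq (by fun_prop) continuous_const

instance : Nontrivial Disk :=
  ⟨polar 0 0, polar 1 0, fun h => by
    simpa [polar, norm_sphPt] using congrArg (fun z : Disk => ‖(z : E2)‖) h⟩

/-- The inclusion of the disk into the complex plane. -/
def toComplex (z : Disk) : ℂ := Complex.orthonormalBasisOneI.repr.symm z

theorem continuous_toComplex : Continuous toComplex := by
  unfold toComplex
  fun_prop

theorem norm_toComplex (z : Disk) : ‖toComplex z‖ = ‖(z : E2)‖ :=
  LinearIsometryEquiv.norm_map _ _

theorem toComplex_injective : Function.Injective toComplex :=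
  (LinearIsometryEquiv.injective _).comp Subtype.val_injective

theorem toComplex_rimPt (t : ℝ) : toComplex (rimPt t) = Complex.exp (t * Complex.I) := by
  rw [toComplex, coe_rimPt, Complex.exp_mul_I]
  simp [Complex.orthonormalBasisOneI, sphPt]

theorem exists_rimPt_eq (t₀ : ℝ) {z : Disk} (hz : z ∈ rim) :
    ∃ t ∈ Ico t₀ (t₀ + 2 * π), rimPt t = z := by
  obtain ⟨t, ht, heq⟩ := rimPt_periodic.exists_mem_Ico Real.two_pi_pos (toComplex z).arg t₀
  refine ⟨t, ht, toComplex_injective ?_⟩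
  rw [← heq, toComplex_rimPt]
  simpa only [norm_toComplex, show ‖(z : E2)‖ = 1 from hz, Complex.ofReal_one, one_mul]
    using Complex.norm_mul_exp_arg_mul_I (toComplex z)

theorem inter_nonempty_of_interleaved {S T : Set Disk} {a₀ b₀ a₁ b₁ : ℝ}
    (hS : JoinedIn S (rimPt a₀) (rimPt a₁)) (hT : JoinedIn T (rimPt b₀) (rimPt b₁))
    (h₁ : a₀ < b₀) (h₂ : b₀ < a₁) (h₃ : a₁ < b₁) (h₄ : b₁ < a₀ + 2 * π) : (S ∩ T).Nonempty := by
  obtain ⟨α, hα⟩ := hS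
  obtain ⟨β, hβ⟩ := hT
  have hnorm : ∀ z : Disk, ‖toComplex z‖ ≤ 1 := fun z =>
    (norm_toComplex z).trans_le (mem_closedBall_zero_iff.1 z.2)
  obtain ⟨s, t, hst⟩ := exists_eq_of_interleaved
    (continuous_toComplex.comp α.continuous_extend) (continuous_toComplex.comp β.continuous_extend)
    (fun _ => hnorm _) (fun _ => hnorm _) h₁ h₂ h₃ h₄
    (by simp only [Function.comp_apply, Path.extend_zero, toComplex_rimPt])
    (by simp only [Function.comp_apply, Path.extend_one, toComplex_rimPt])
    (by simp only [Function.comp_apply, Path.extend_zero, toComplex_rimPt])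
    (by simp only [Function.comp_apply, Path.extend_one, toComplex_rimPt])
  have heq : α (projIcc 0 1 zero_le_one s) = β (projIcc 0 1 zero_le_one t) :=
    toComplex_injective hst
  exact ⟨_, hα _, heq ▸ hβ _⟩

variable {F : Disk → ℝ} {t : ℝ}

theorem exists_joinedIn_of_isStrictLocalMax_polar
    (h : IsStrictLocalMax (fun r => F (polar r t)) 1) :
    ∃ y, F y < F (rimPt t) ∧ JoinedIn {z | F z ≤ F (rimPt t)} (rimPt t) y := by
  have hU : {r | F (polar r t) ≤ F (rimPt t)} ∈ 𝓝 (1 : I) := by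
    rw [IsStrictLocalMax, eventually_nhdsWithin_iff] at h
    filter_upwards [h] with r hr
    rcases eq_or_ne r 1 with rfl | hr1
    exacts [le_rfl, (hr hr1).le]
  obtain ⟨r, hlt, hjoin⟩ :=
    (h.and (mem_nhdsWithin_of_mem_nhds (pathComponentIn_mem_nhds hU))).exists
  exact ⟨polar r t, hlt, (hjoin.map_continuousOn (continuous_polar_left t).continuousOn).mono
    (image_subset_iff.2 fun _ hs => hs)⟩

/-- The path in `{F > F p}` joining the two sides of `p` on the rim separates the points just
inside `p` from the rest of the rim. -/
theorem isEnclosedLevel_of_joinedIn {a b : ℝ} (ht : t ∈ Ioo a b)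
    (hle : ∀ s ∈ Icc a b, F (rimPt t) ≤ F (rimPt s))
    (hrad : IsStrictLocalMax (fun r => F (polar r t)) 1)
    (hab : JoinedIn {z | F (rimPt t) < F z} (rimPt a) (rimPt b)) :
    IsEnclosedLevel F rim (F (rimPt t)) := by
  obtain ⟨y, hy, hty⟩ := exists_joinedIn_of_isStrictLocalMax_polar hrad
  refine ⟨rimPt t, rimPt_mem_rim t, y, hy, hty, fun q hq hyq => ?_⟩
  obtain ⟨s, hs, rfl⟩ := exists_rimPt_eq a hq
  have hbs : b < s := by
    by_contra! hsb
    exact (show F (rimPt s) < _ from hyq.target_mem).not_ge (hle s ⟨hs.1, hsb⟩)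
  obtain ⟨z, hz, hz'⟩ := inter_nonempty_of_interleaved hab
    (hty.trans (hyq.mono fun z (hz : F z < F (rimPt t)) => hz.le)) ht.1 ht.2 hbs hs.2
  exact (show F (rimPt t) < F z from hz).not_ge hz'

theorem isMergeLevel_or_isEnclosedLevel
    (hrim : IsStrictLocalMin (fun s => F (rimPt s)) t)
    (hrad : IsStrictLocalMax (fun r => F (polar r t)) 1) :
    IsMergeLevel F (F (rimPt t)) ∨ IsEnclosedLevel F rim (F (rimPt t)) := by
  obtain ⟨a, b, ht, hab⟩ : ∃ a b, t ∈ Ioo a b ∧ ∀ s ∈ Icc a b, s ≠ t →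
      F (rimPt t) < F (rimPt s) := by
    obtain ⟨ε, hε, hball⟩ := Metric.nhds_basis_closedBall.mem_iff.1
      (eventually_nhdsWithin_iff.1 hrim)
    rw [Real.closedBall_eq_Icc] at hball
    exact ⟨t - ε, t + ε, ⟨by linarith, by linarith⟩, fun s hs => hball hs⟩
  have hle : ∀ s ∈ Icc a b, F (rimPt t) ≤ F (rimPt s) := fun s hs => by
    rcases eq_or_ne s t with rfl | hst
    exacts [le_rfl, (hab s hs hst).le]
  have hlt : a < b := ht.1.trans ht.2
  by_cases hjoin : JoinedIn {z | F (rimPt t) < F z} (rimPt a) (rimPt b)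
  · exact .inr (isEnclosedLevel_of_joinedIn ht hle hrad hjoin)
  · refine .inl ⟨rimPt a, rimPt b, hab a (left_mem_Icc.2 hlt.le) ht.1.ne,
      hab b (right_mem_Icc.2 hlt.le) ht.2.ne', hjoin, fun c' hc' => ?_⟩
    have harc : IsPathConnected (rimPt '' Icc a b) :=
      ((convex_Icc a b).isPathConnected (nonempty_Icc.2 hlt.le)).image continuous_rimPt
    refine (harc.joinedIn _ (mem_image_of_mem _ (left_mem_Icc.2 hlt.le)) _
      (mem_image_of_mem _ (right_mem_Icc.2 hlt.le))).mono ?_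
    rintro _ ⟨s, hs, rfl⟩
    exact hc'.trans_le (hle s hs)

end Disk

section Nodes

open Disk

/-- A node with marking `s = ±1` of `F` on the bounding circle at angle `t`. The sign is `1` when
`F` has extrema of the same kind along the circle and along the radius ending at the node, and
`-1` when they are of opposite kinds. -/
inductive IsNode (F : Disk → ℝ) (t : ℝ) : ℤ → Prop
  | min_pos : IsStrictLocalMin (fun s => F (rimPt s)) t →
      IsStrictLocalMin (fun r => F (polar r t)) 1 → IsNode F t 1
  | min_neg : IsStrictLocalMin (fun s => F (rimPt s)) t →
      IsStrictLocalMax (fun r => F (polar r t)) 1 → IsNode F t (-1)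
  | max_pos : IsStrictLocalMax (fun s => F (rimPt s)) t →
      IsStrictLocalMax (fun r => F (polar r t)) 1 → IsNode F t 1
  | max_neg : IsStrictLocalMax (fun s => F (rimPt s)) t →
      IsStrictLocalMin (fun r => F (polar r t)) 1 → IsNode F t (-1)

namespace IsNode

variable {F : Disk → ℝ} {t : ℝ} {s : ℤ}

theorem neg (h : IsNode F t s) : IsNode (fun z => -F z) t s := by
  cases h with
  | min_pos hrim hrad =>
    exact max_pos (isStrictLocalMax_neg_iff.2 hrim) (isStrictLocalMax_neg_iff.2 hrad)
  | min_neg hrim hrad =>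
    exact max_neg (isStrictLocalMax_neg_iff.2 hrim) (isStrictLocalMin_neg_iff.2 hrad)
  | max_pos hrim hrad =>
    exact min_pos (isStrictLocalMin_neg_iff.2 hrim) (isStrictLocalMin_neg_iff.2 hrad)
  | max_neg hrim hrad =>
    exact min_neg (isStrictLocalMin_neg_iff.2 hrim) (isStrictLocalMax_neg_iff.2 hrad)

theorem eq_one_or_eq_neg_one (h : IsNode F t s) : s = 1 ∨ s = -1 := by
  cases h <;> simp only [true_or, or_true]

theorem isStrictLocalMin_or_isStrictLocalMax (h : IsNode F t s) :
    IsStrictLocalMin (fun s => F (rimPt s)) t ∨ IsStrictLocalMax (fun s => F (rimPt s)) t := by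
  cases h with
  | min_pos hrim _ | min_neg hrim _ => exact .inl hrim
  | max_pos hrim _ | max_neg hrim _ => exact .inr hrim

theorem isStrictLocalMax_polar (h : IsNode F t (-1))
    (hmin : IsStrictLocalMin (fun s => F (rimPt s)) t) :
    IsStrictLocalMax (fun r => F (polar r t)) 1 := by
  cases h with
  | min_neg _ hrad => exact hrad
  | max_neg hrim _ => exact (hmin.not_isStrictLocalMax hrim).elim

theorem eq_one_and_isStrictLocalMax (h : IsNode F t s) (hmax : IsLocalMax F (rimPt t)) :
    s = 1 ∧ IsStrictLocalMax (fun s => F (rimPt s)) t := by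
  have hrim_max : IsLocalMax (fun s => F (rimPt s)) t :=
    hmax.comp_continuous continuous_rimPt.continuousAt
  have hrad_max : IsLocalMax (fun r => F (polar r t)) 1 :=
    IsLocalMax.comp_continuous hmax (continuous_polar_left t).continuousAt
  cases h with
  | min_pos hrim _ | min_neg hrim _ => exact (hrim.not_isLocalMax hrim_max).elim
  | max_pos hrim _ => exact ⟨rfl, hrim⟩
  | max_neg _ hrad => exact (hrad.not_isLocalMax hrad_max).elim

end IsNode

/-- The topological content of an extension of a ribbon: `F` is a continuous function on the
closed disk whose restriction to the bounding circle has its local extrema exactly at the angles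
`θ i`, these being nodes with markings `ν i` and pairwise distinct values. -/
structure IsNodeSystem {ι : Type*} (F : Disk → ℝ) (θ : ι → ℝ) (ν : ι → ℤ) : Prop where
  continuous : Continuous F
  value_injective : Function.Injective fun i => F (rimPt (θ i))
  exists_rimPt_eq : ∀ ⦃t⦄, IsLocalExtr (fun s => F (rimPt s)) t → ∃ i, rimPt (θ i) = rimPt t
  isNode : ∀ i, IsNode F (θ i) (ν i)

namespace IsNodeSystem

variable {ι : Type*} {F : Disk → ℝ} {θ : ι → ℝ} {ν : ι → ℤ}

theorem neg (h : IsNodeSystem F θ ν) : IsNodeSystem (fun z => -F z) θ ν where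
  continuous := h.continuous.neg
  value_injective := neg_injective.comp h.value_injective
  exists_rimPt_eq _ ht := h.exists_rimPt_eq (isLocalExtr_neg_iff.1 ht)
  isNode i := (h.isNode i).neg

theorem encard_isLocalMax_le (h : IsNodeSystem F θ ν) :
    {z | IsLocalMax F z}.encard ≤ {z | z ∉ rim ∧ IsLocalMax F z}.encard +
      {i | ν i = 1 ∧ IsStrictLocalMax (fun s => F (rimPt s)) (θ i)}.encard := by
  have hsub : {z | IsLocalMax F z} ⊆ {z | z ∉ rim ∧ IsLocalMax F z} ∪
      (fun i => rimPt (θ i)) '' {i | ν i = 1 ∧ IsStrictLocalMax (fun s => F (rimPt s)) (θ i)} := by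
    intro z hmax
    by_cases hz : z ∈ rim
    swap
    · exact .inl ⟨hz, hmax⟩
    obtain ⟨t, -, rfl⟩ := Disk.exists_rimPt_eq 0 hz
    obtain ⟨i, hi⟩ := h.exists_rimPt_eq
      (.inr (IsLocalMax.comp_continuous hmax continuous_rimPt.continuousAt))
    exact .inr ⟨i, (h.isNode i).eq_one_and_isStrictLocalMax (hi ▸ hmax), hi⟩
  grw [hsub, encard_union_le, encard_image_le]

theorem encard_minNeg_le (h : IsNodeSystem F θ ν) :
    {i | ν i = -1 ∧ IsStrictLocalMin (fun s => F (rimPt s)) (θ i)}.encard ≤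
      {c | IsMergeLevel F c}.encard + {c | IsEnclosedLevel F rim c}.encard := by
  rw [← h.value_injective.encard_image]
  refine le_trans (encard_le_encard ?_) (encard_union_le _ _)
  rintro _ ⟨i, ⟨hν, hmin⟩, rfl⟩
  exact isMergeLevel_or_isEnclosedLevel hmin ((hν ▸ h.isNode i).isStrictLocalMax_polar hmin)

theorem encard_minNeg_add_one_le (h : IsNodeSystem F θ ν) :
    {i | ν i = -1 ∧ IsStrictLocalMin (fun s => F (rimPt s)) (θ i)}.encard + 1 ≤
      {z | z ∉ rim ∧ IsLocalExtr F z}.encard +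
        {i | ν i = 1 ∧ IsStrictLocalMax (fun s => F (rimPt s)) (θ i)}.encard := by
  grw [h.encard_minNeg_le, encard_isEnclosedLevel_le h.continuous, add_right_comm,
    encard_isMergeLevel_add_one_le h.continuous, h.encard_isLocalMax_le, add_right_comm,
    encard_isLocalMax_add_encard_isLocalMin_le isClosed_rim]

theorem encard_eq_encard_min_add_encard_max (h : IsNodeSystem F θ ν) (s : ℤ) :
    {i | ν i = s}.encard =
      {i | ν i = s ∧ IsStrictLocalMin (fun s => F (rimPt s)) (θ i)}.encard +
        {i | ν i = s ∧ IsStrictLocalMax (fun s => F (rimPt s)) (θ i)}.encard := by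
  rw [← encard_union_eq (Set.disjoint_left.2 fun i hmin hmax =>
    hmin.2.not_isStrictLocalMax hmax.2)]
  congr 1
  ext i
  simp only [mem_union, mem_ofPred_eq, ← and_or_left,
    (h.isNode i).isStrictLocalMin_or_isStrictLocalMax, and_true]

theorem encard_neg_add_two_le (h : IsNodeSystem F θ ν) :
    {i | ν i = -1}.encard + 2 ≤
      2 * {z | z ∉ rim ∧ IsLocalExtr F z}.encard + {i | ν i = 1}.encard := by
  have hmin := h.encard_minNeg_add_one_le
  have hmax := h.neg.encard_minNeg_add_one_le
  simp only [isStrictLocalMin_neg_iff, isStrictLocalMax_neg_iff, isLocalExtr_neg_iff] at hmax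
  rw [h.encard_eq_encard_min_add_encard_max, h.encard_eq_encard_min_add_encard_max]
  refine (Eq.le ?_).trans ((add_le_add hmin hmax).trans_eq ?_) <;> ring

end IsNodeSystem

theorem sum_eq_ncard_sub_ncard {ι : Type*} [Fintype ι] {ν : ι → ℤ}
    (hν : ∀ i, ν i = 1 ∨ ν i = -1) :
    ∑ i, ν i = {i | ν i = 1}.ncard - {i | ν i = -1}.ncard := by
  have hcard : ∀ s : ℤ, ({i | ν i = s}.ncard : ℤ) = ∑ i, if ν i = s then 1 else 0 := fun s => by
    rw [Finset.sum_boole, ncard_eq_toFinset_card', toFinset_ofPred]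
  rw [hcard, hcard, ← Finset.sum_sub_distrib]
  refine Finset.sum_congr rfl fun i _ => ?_
  rcases hν i with h | h <;> simp [h]

theorem stmt_8_general {ι : Type*} [Fintype ι] {F : Disk → ℝ} {θ : ι → ℝ} {ν : ι → ℤ}
    (h : IsNodeSystem F θ ν) :
    ((1 - (∑ i, ν i) / 2).toNat : ℕ∞) ≤ {z | z ∉ rim ∧ IsLocalExtr F z}.encard := by
  rcases {z | z ∉ rim ∧ IsLocalExtr F z}.finite_or_infinite with hfin | hinf
  swap
  · exact hinf.encard_eq ▸ le_top
  have hcount : {i | ν i = -1}.ncard + 2 ≤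
      2 * {z | z ∉ rim ∧ IsLocalExtr F z}.ncard + {i | ν i = 1}.ncard := by
    have hencard := h.encard_neg_add_two_le
    rw [← hfin.cast_ncard_eq, ← (toFinite {i | ν i = -1}).cast_ncard_eq,
      ← (toFinite {i | ν i = 1}).cast_ncard_eq] at hencard
    exact_mod_cast hencard
  have hsum := sum_eq_ncard_sub_ncard fun i => (h.isNode i).eq_one_or_eq_neg_one
  rw [← hfin.cast_ncard_eq, Nat.cast_le]
  omega

end Nodes

section Smooth

open Disk unitInterval

theorem isStrictLocalMin_of_deriv_deriv_pos {g : ℝ → ℝ} {x : ℝ} (hg : Differentiable ℝ g)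
    (hg' : deriv g x = 0) (hg'' : 0 < deriv (deriv g) x) : IsStrictLocalMin g x := by
  -- Subtracting a small multiple of `(t - x) ^ 2` keeps the second derivative positive, so the
  -- difference still has a minimum at `x`, which makes that of `g` strict.
  obtain ⟨k, hk, hk'⟩ : ∃ k, 0 < k ∧ 0 < deriv (deriv g) x - 2 * k :=
    ⟨deriv (deriv g) x / 4, by linarith, by linarith⟩
  have hderiv : deriv (fun t => g t - k * (t - x) ^ 2) = fun t => deriv g t - 2 * k * (t - x) := by
    funext t
    rw [deriv_fun_sub (hg t) (by fun_prop), deriv_const_mul_field, deriv_fun_pow (by fun_prop),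
      deriv_sub_const, deriv_id'']
    ring
  have hderiv₂ : deriv (deriv fun t => g t - k * (t - x) ^ 2) x = deriv (deriv g) x - 2 * k := by
    rw [hderiv, deriv_fun_sub (differentiableAt_of_deriv_ne_zero hg''.ne') (by fun_prop),
      deriv_const_mul_field, deriv_sub_const, deriv_id'', mul_one]
  have hmin : IsLocalMin (fun t => g t - k * (t - x) ^ 2) x :=
    isLocalMin_of_deriv_deriv_pos (hderiv₂ ▸ hk') (by simp only [hderiv, hg', sub_self, mul_zero])
      (hg.continuous.sub (by fun_prop)).continuousAt
  filter_upwards [hmin.filter_mono nhdsWithin_le_nhds, self_mem_nhdsWithin] with t ht hne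
  have hpos : 0 < k * (t - x) ^ 2 := mul_pos hk (sq_pos_of_ne_zero (sub_ne_zero.2 hne))
  linarith

theorem isStrictLocalMax_of_deriv_deriv_neg {g : ℝ → ℝ} {x : ℝ} (hg : Differentiable ℝ g)
    (hg' : deriv g x = 0) (hg'' : deriv (deriv g) x < 0) : IsStrictLocalMax g x := by
  rw [← isStrictLocalMin_neg_iff]
  apply isStrictLocalMin_of_deriv_deriv_pos hg.fun_neg
  · rw [deriv.fun_neg, hg', neg_zero]
  · simpa only [deriv.fun_neg', neg_pos] using hg''

theorem isStrictLocalMax_one_of_hasDerivAt {u : ℝ → ℝ} {u' : ℝ} (hu : HasDerivAt u u' 1)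
    (hu' : 0 < u') : IsStrictLocalMax (fun r : I => u r) 1 := by
  have hcoe : Tendsto ((↑) : I → ℝ) (𝓝[≠] 1) (𝓝[≠] 1) :=
    continuous_subtype_val.continuousAt.continuousWithinAt.tendsto_nhdsWithin
      fun r hr h => hr (Subtype.ext h)
  filter_upwards [hcoe.eventually ((hasDerivAt_iff_tendsto_slope.1 hu).eventually
    (lt_mem_nhds hu')), self_mem_nhdsWithin] with r hslope hr
  exact (slope_pos_iff_gt (Subtype.coe_lt_coe.2 (unitInterval.lt_one_iff_ne_one.2 hr))).1 hslope

theorem isStrictLocalMin_one_of_hasDerivAt {u : ℝ → ℝ} {u' : ℝ} (hu : HasDerivAt u u' 1)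
    (hu' : u' < 0) : IsStrictLocalMin (fun r : I => u r) 1 :=
  isStrictLocalMax_neg_iff.1 (isStrictLocalMax_one_of_hasDerivAt hu.neg (neg_pos.2 hu'))

theorem hasDerivAt_apply_smul {E : Type*} [NormedAddCommGroup E] [InnerProductSpace ℝ E]
    [CompleteSpace E] {f : E → ℝ} {p : E} (hf : DifferentiableAt ℝ f p) :
    HasDerivAt (fun r : ℝ => f (r • p)) ⟪gradient f p, p⟫ 1 := by
  have hray : HasDerivAt (fun r : ℝ => r • p) p 1 := by
    simpa only [one_smul] using (hasDerivAt_id' (1 : ℝ)).smul_const p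
  rw [inner_gradient_left]
  exact HasFDerivAt.comp_hasDerivAt 1 (by simpa only [one_smul] using hf.hasFDerivAt) hray

namespace Ribbon

variable {n : ℕ} (a : Ribbon n)

theorem exists_rimPt_eq_of_deriv_eq_zero {t : ℝ} (ht : deriv a.g t = 0) :
    ∃ i, rimPt (a.θ i) = rimPt t := by
  have hper : Function.Periodic (fun t => (rimPt t, deriv a.g t)) (2 * π) := fun t => by
    have hg : (fun s => a.g (s + 2 * π)) = a.g := funext a.periodic_g
    rw [Prod.mk.injEq, ← deriv_comp_add_const, hg]
    exact ⟨rimPt_periodic t, rfl⟩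
  obtain ⟨s, hs, heq⟩ := hper.exists_mem_Ico₀ Real.two_pi_pos t
  obtain ⟨hrim, hderiv⟩ := Prod.mk.inj heq
  obtain ⟨i, rfl⟩ := a.crit_only s hs (hderiv ▸ ht)
  exact ⟨i, hrim.symm⟩

end Ribbon

theorem IsExtension.isNodeSystem {n : ℕ} {a : Ribbon n} {f : E2 → ℝ} (hf : IsExtension a f) :
    IsNodeSystem (fun z : Disk => f z) a.θ a.ν := by
  obtain ⟨hsmooth, hrim, -, hrad⟩ := hf
  have hg : Differentiable ℝ a.g := a.smooth_g.differentiable (by simp)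
  have hfg : (fun s => f (rimPt s)) = a.g := funext fun s => by rw [coe_rimPt, hrim]
  refine ⟨hsmooth.continuous.comp continuous_subtype_val, fun i j h => a.values_distinct i j ?_,
    fun t ht => ?_, fun i => ?_⟩
  · simpa only [coe_rimPt, hrim] using h
  · rw [hfg] at ht
    exact a.exists_rimPt_eq_of_deriv_eq_zero ht.deriv_eq_zero
  · have hray := hasDerivAt_apply_smul (hsmooth.differentiable (by simp) (sphPt (a.θ i)))
    obtain ⟨hmax, hmin⟩ := hrad i
    rcases lt_or_gt_of_ne (a.node_nondeg i) with hneg | hpos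
    · have hrim_max := isStrictLocalMax_of_deriv_deriv_neg hg (a.node_crit i) hneg
      have hsign := hmax hneg
      rw [← hfg] at hrim_max
      rcases a.nu_sign i with hν | hν <;> rw [hν] at hsign ⊢ <;> push_cast at hsign
      · exact .max_pos hrim_max (isStrictLocalMax_one_of_hasDerivAt hray (by linarith))
      · exact .max_neg hrim_max (isStrictLocalMin_one_of_hasDerivAt hray (by linarith))
    · have hrim_min := isStrictLocalMin_of_deriv_deriv_pos hg (a.node_crit i) hpos
      have hsign := hmin hpos
      rw [← hfg] at hrim_min
      rcases a.nu_sign i with hν | hν <;> rw [hν] at hsign ⊢ <;> push_cast at hsign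
      · exact .min_pos hrim_min (isStrictLocalMin_one_of_hasDerivAt hray (by linarith))
      · exact .min_neg hrim_min (isStrictLocalMax_one_of_hasDerivAt hray (by linarith))

theorem encard_isLocalExtr_disk_le (f : E2 → ℝ) :
    {z : Disk | z ∉ rim ∧ IsLocalExtr (fun z : Disk => f z) z}.encard ≤
      {x | x ∈ Metric.ball 0 1 ∧ (IsLocalMax f x ∨ IsLocalMin f x)}.encard := by
  refine encard_le_encard_of_injOn (fun z ⟨hz, hextr⟩ => ?_) Subtype.val_injective.injOn
  have hball : (z : E2) ∈ Metric.ball 0 1 := notMem_rim_iff.1 hz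
  have hmap : map ((↑) : Disk → E2) (𝓝 z) = 𝓝 (z : E2) :=
    map_nhds_subtype_coe_eq_nhds z.2
      (mem_of_superset (Metric.isOpen_ball.mem_nhds hball) Metric.ball_subset_closedBall)
  refine ⟨hball, hextr.symm.imp (fun h => ?_) fun h => ?_⟩
  · change IsMaxFilter f (𝓝 (z : E2)) z
    rw [← hmap]
    exact h
  · change IsMinFilter f (𝓝 (z : E2)) z
    rw [← hmap]
    exact h

end Smooth

/-- Every extension `f` of a ribbon `a` with signature `σ` has at least `1 − σ/2` points in
the open unit disk that are local extrema (local maxima or local minima) of `f`. -/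
theorem stmt_8 (n : ℕ) (a : Ribbon n) (f : E2 → ℝ) (hf : IsExtension a f) :
    (((1 - a.sigma / 2).toNat : ℕ∞) ≤
      {x : E2 | x ∈ Metric.ball (0 : E2) 1 ∧ (IsLocalMax f x ∨ IsLocalMin f x)}.encard) :=
  (stmt_8_general hf.isNodeSystem).trans (encard_isLocalExtr_disk_le f)
end
end

section
/- Let a be a ribbon with signature σ = σ(a), and let f be an extension of a all of whose critical points in the open unit disk are nondegenerate (invertible Hessian), with exactly m critical points, m finite. Then m ≥ |1 − σ/2| and m ≡ 1 − σ/2 (mod 2). -/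
open scoped RealInnerProductSpace

noncomputable section

/-!
Let `N` be the sum of the signs of the Hessian determinants over the critical points of `f`. Near a
critical point `s`, the gradient field, read in `ℂ`, is dominated by a multiple of `z - s` or of its
conjugate, depending on that sign. Dividing by this factor removes the zero, and a zero-free field
has winding number `0`; hence `∇f` has winding number `N` along the unit circle (Poincaré–Hopf) and
`conj z * ∇f` has winding number `N - 1`.

The real and imaginary parts of `conj z * ∇f` are the radial and angular derivatives of `f`. So this
loop crosses the real axis exactly at the nodes, each crossing being half a turn whose direction is
the opposite of the marking. Hence `N - 1 = -σ/2`, that is, `1 - σ/2` is a sum of `m` signs.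
-/

section SignChanges

open Filter Set Real
open scoped Topology

theorem eventually_sign_eq_of_hasDerivAt {g : ℝ → ℝ} {c x : ℝ} (hg : HasDerivAt g c x)
    (hc : c ≠ 0) (hx : g x = 0) :
    ∀ᶠ t in 𝓝 x, SignType.sign (g t) = SignType.sign c * SignType.sign (t - x) := by
  rcases hc.lt_or_gt with hc | hc
  · filter_upwards [eventually_nhdsWithin_sign_eq_of_deriv_neg (hg.deriv.trans_lt hc) hx]
      with t ht
    rw [ht, sign_neg hc, neg_one_mul, ← Left.sign_neg, neg_sub]
  · filter_upwards [eventually_nhdsWithin_sign_eq_of_deriv_pos (hc.trans_eq hg.deriv.symm) hx]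
      with t ht
    rw [ht, sign_pos hc, one_mul]

/-- A step function increasing by one at each side of a multiple of `π`: its value is `2 * k` at
`k * π` and `2 * k + 1` between `k * π` and `(k + 1) * π`. Along a continuous angle it counts,
with multiplicity two, the crossings of the real axis. -/
def halfTurns (y : ℝ) : ℤ := ⌊y / π⌋ + ⌈y / π⌉

theorem halfTurns_int_mul_pi (k : ℤ) : halfTurns (k * π) = 2 * k := by
  rw [halfTurns, mul_div_cancel_right₀ _ pi_ne_zero, Int.floor_intCast, Int.ceil_intCast, two_mul]

theorem halfTurns_of_mem_Ioo {y : ℝ} {k : ℤ} (hy : y ∈ Ioo (k * π) ((k + 1) * π)) :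
    halfTurns y = 2 * k + 1 := by
  have hlt : k < y / π := (lt_div_iff₀ pi_pos).2 hy.1
  have hgt : y / π < k + 1 := (div_lt_iff₀ pi_pos).2 hy.2
  have hfloor : ⌊y / π⌋ = k := Int.floor_eq_iff.2 ⟨hlt.le, hgt⟩
  have hceil : ⌈y / π⌉ = k + 1 := Int.ceil_eq_iff.2 ⟨by simpa using hlt, by simpa using hgt.le⟩
  rw [halfTurns, hfloor, hceil]
  ring

theorem halfTurns_add_int_mul_two_pi (y : ℝ) (k : ℤ) :
    halfTurns (y + k * (2 * π)) = halfTurns y + 4 * k := by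
  have hdiv : (y + k * (2 * π)) / π = y / π + (2 * k : ℤ) := by
    push_cast
    field_simp
  rw [halfTurns, halfTurns, hdiv, Int.floor_add_intCast, Int.ceil_add_intCast]
  ring

theorem eventually_halfTurns_eq {y : ℝ} (hy : sin y ≠ 0) :
    ∀ᶠ u in 𝓝 y, halfTurns u = halfTurns y := by
  have hmem : y ∈ Ioo (⌊y / π⌋ * π) ((⌊y / π⌋ + 1) * π) := by
    refine ⟨lt_of_le_of_ne ((le_div_iff₀ pi_pos).1 (Int.floor_le _)) fun h ↦ hy ?_,
      (div_lt_iff₀ pi_pos).1 (Int.lt_floor_add_one _)⟩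
    rw [← h, sin_int_mul_pi]
  filter_upwards [Ioo_mem_nhds hmem.1 hmem.2] with u hu
  rw [halfTurns_of_mem_Ioo hu, halfTurns_of_mem_Ioo hmem]

theorem eventually_halfTurns_eq_add_sign (k : ℤ) :
    ∀ᶠ u in 𝓝 (k * π), halfTurns u = 2 * k + SignType.sign (u - k * π) := by
  have hlt : (k - 1) * π < k * π := by linarith [pi_pos]
  have hgt : k * π < (k + 1) * π := by linarith [pi_pos]
  filter_upwards [Ioo_mem_nhds hlt hgt] with u hu
  rcases lt_trichotomy u (k * π) with h | rfl | h
  · rw [halfTurns_of_mem_Ioo (k := k - 1) (by push_cast; exact ⟨hu.1, by linarith⟩),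
      sign_neg (sub_neg.2 h), SignType.coe_neg_one]
    ring
  · simp [halfTurns_int_mul_pi]
  · rw [halfTurns_of_mem_Ioo ⟨h, hu.2⟩, sign_pos (sub_pos.2 h), SignType.coe_one]

theorem eventually_halfTurns_eq_add_sign_cos_mul_sign_sin {y : ℝ} (hy : sin y = 0) :
    ∀ᶠ u in 𝓝 y, halfTurns u =
      halfTurns y + (SignType.sign (cos y) * SignType.sign (sin u) : SignType) := by
  have hcos : cos y ≠ 0 := fun h ↦ by simpa [hy, h] using sin_sq_add_cos_sq y
  obtain ⟨k, rfl⟩ := sin_eq_zero_iff.1 hy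
  filter_upwards [eventually_halfTurns_eq_add_sign k,
    eventually_sign_eq_of_hasDerivAt (hasDerivAt_sin _) hcos hy] with u hu hsin
  rw [hu, hsin, halfTurns_int_mul_pi, ← mul_assoc, ← sign_mul, sign_pos (mul_self_pos.2 hcos),
    one_mul]

theorem eventually_sum_mul_sign_sub_eq (Z : Finset ℝ) (d : ℝ → SignType) (x : ℝ) :
    ∀ᶠ t in 𝓝 x, ∑ z ∈ Z, ((d z * SignType.sign (t - z) : SignType) : ℤ) =
      ∑ z ∈ Z, ((d z * SignType.sign (x - z) : SignType) : ℤ) +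
        if x ∈ Z then ((d x * SignType.sign (t - x) : SignType) : ℤ) else 0 := by
  have hsign : ∀ᶠ t in 𝓝 x, ∀ z ∈ Z, z ≠ x → SignType.sign (t - z) = SignType.sign (x - z) := by
    refine (eventually_all_finset Z).2 fun z _ ↦ eventually_imp_distrib_left.2 fun hzx ↦ ?_
    have hcont : ContinuousAt (fun t ↦ SignType.sign (t - z)) x :=
      (continuousAt_sign_of_ne_zero (sub_ne_zero.2 hzx.symm)).comp
        (f := fun t ↦ t - z) (by fun_prop)
    exact hcont ((isOpen_discrete {_}).mem_nhds rfl)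
  filter_upwards [hsign] with t ht
  rw [← sub_eq_iff_eq_add', ← Finset.sum_sub_distrib]
  split_ifs with hx
  · rw [Finset.sum_eq_single_of_mem x hx fun z hz hzx ↦ by rw [ht z hz hzx, sub_self]]
    simp
  · refine Finset.sum_eq_zero fun z hz ↦ ?_
    rw [ht z hz (ne_of_mem_of_not_mem hz hx), sub_self]

theorem sub_eq_two_mul_sum_of_eventually_eq_add_sign {q : ℝ → ℤ} {d : ℝ → SignType}
    {Z : Finset ℝ} {a b : ℝ} (hab : a ≤ b) (hZ : ↑Z ⊆ Ioo a b)
    (hjump : ∀ x ∈ Z, ∀ᶠ t in 𝓝 x, q t = q x + (d x * SignType.sign (t - x) : SignType))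
    (hconst : ∀ x ∈ Icc a b, x ∉ Z → ∀ᶠ t in 𝓝 x, q t = q x) :
    q b - q a = 2 * ∑ x ∈ Z, (d x : ℤ) := by
  let J (t : ℝ) : ℤ := ∑ z ∈ Z, (d z * SignType.sign (t - z) : SignType)
  have hJ (x : ℝ) : ∀ᶠ t in 𝓝 x, J t =
      J x + if x ∈ Z then ((d x * SignType.sign (t - x) : SignType) : ℤ) else 0 :=
    eventually_sum_mul_sign_sub_eq Z d x
  have hlocal (x : ℝ) (hx : x ∈ Icc a b) : ∀ᶠ t in 𝓝 x, q t - J t = q x - J x := by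
    by_cases hxZ : x ∈ Z
    · filter_upwards [hjump x hxZ, hJ x] with t hq hJt
      rw [hq, hJt, if_pos hxZ]
      ring
    · filter_upwards [hconst x hx hxZ, hJ x] with t hq hJt
      rw [hq, hJt, if_neg hxZ, add_zero]
  have hcont : ContinuousOn (fun t ↦ q t - J t) (Icc a b) := fun x hx ↦
    (continuousAt_const.congr (EventuallyEq.symm (hlocal x hx))).continuousWithinAt
  have heq : q a - J a = q b - J b :=
    isPreconnected_Icc.constant hcont (left_mem_Icc.2 hab) (right_mem_Icc.2 hab)
  have hJa : J a = -∑ z ∈ Z, (d z : ℤ) := by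
    rw [← Finset.sum_neg_distrib]
    refine Finset.sum_congr rfl fun z hz ↦ ?_
    rw [sign_neg (sub_neg.2 (hZ hz).1)]
    simp
  have hJb : J b = ∑ z ∈ Z, (d z : ℤ) := by
    refine Finset.sum_congr rfl fun z hz ↦ ?_
    rw [sign_pos (sub_pos.2 (hZ hz).2), mul_one]
  linarith

end SignChanges

section WindingNumber

open Complex ComplexConjugate Filter Set
open scoped Topology

theorem sign_exp_re (w : ℂ) : SignType.sign (exp w).re = SignType.sign (Real.cos w.im) := by
  rw [exp_re, sign_mul, sign_pos (Real.exp_pos _), one_mul]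

theorem sign_exp_im (w : ℂ) : SignType.sign (exp w).im = SignType.sign (Real.sin w.im) := by
  rw [exp_im, sign_mul, sign_pos (Real.exp_pos _), one_mul]

theorem exp_im_eq_zero_iff {w : ℂ} : (exp w).im = 0 ↔ Real.sin w.im = 0 := by
  rw [← sign_eq_zero_iff, sign_exp_im, sign_eq_zero_iff]

theorem halfTurns_im_sub_eq_two_mul_sum {Φ : ℝ → ℂ} {T' : ℝ → ℝ} {Z : Finset ℝ} {a b : ℝ}
    (hΦ : Continuous Φ) (hab : a ≤ b) (hZ : ↑Z ⊆ Ioo a b)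
    (hcross : ∀ t ∈ Icc a b, (exp (Φ t)).im = 0 ↔ t ∈ Z)
    (hderiv : ∀ x ∈ Z, HasDerivAt (fun t ↦ (exp (Φ t)).im) (T' x) x) (hT' : ∀ x ∈ Z, T' x ≠ 0) :
    halfTurns (Φ b).im - halfTurns (Φ a).im =
      2 * ∑ x ∈ Z, ((SignType.sign (exp (Φ x)).re * SignType.sign (T' x) : SignType) : ℤ) := by
  have him (x : ℝ) : Tendsto (fun t ↦ (Φ t).im) (𝓝 x) (𝓝 (Φ x).im) :=
    (continuous_im.comp hΦ).tendsto x
  refine sub_eq_two_mul_sum_of_eventually_eq_add_sign (q := fun t ↦ halfTurns (Φ t).im)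
    (d := fun x ↦ SignType.sign (exp (Φ x)).re * SignType.sign (T' x)) hab hZ
    (fun x hx ↦ ?_) fun x hx hxZ ↦ ?_
  · have h0 : (exp (Φ x)).im = 0 := (hcross x (Ioo_subset_Icc_self (hZ hx))).2 hx
    filter_upwards [(him x).eventually
      (eventually_halfTurns_eq_add_sign_cos_mul_sign_sin (exp_im_eq_zero_iff.1 h0)),
      eventually_sign_eq_of_hasDerivAt (hderiv x hx) (hT' x hx) h0] with t hturn hsign
    rw [hturn, ← sign_exp_re, ← sign_exp_im, hsign, mul_assoc]
  · have hsin : Real.sin (Φ x).im ≠ 0 := fun h ↦ hxZ ((hcross x hx).1 (exp_im_eq_zero_iff.2 h))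
    exact (him x).eventually (eventually_halfTurns_eq hsin)

/-- The `2π`-periodic zero-free loop `γ` has winding number `k` around the origin: it lifts through
the exponential to a continuous path that gains `2πik` over each period. -/
def HasWindingNumber (γ : ℝ → ℂ) (k : ℤ) : Prop :=
  ∃ Φ : ℝ → ℂ, Continuous Φ ∧ (∀ t, exp (Φ t) = γ t) ∧
    ∀ t, Φ (t + 2 * Real.pi) = Φ t + k * (2 * Real.pi * I)

namespace HasWindingNumber

variable {γ₁ γ₂ γ : ℝ → ℂ} {k₁ k₂ k : ℤ}

theorem mul (h₁ : HasWindingNumber γ₁ k₁) (h₂ : HasWindingNumber γ₂ k₂) :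
    HasWindingNumber (fun t ↦ γ₁ t * γ₂ t) (k₁ + k₂) := by
  obtain ⟨Φ₁, hΦ₁, hexp₁, hper₁⟩ := h₁
  obtain ⟨Φ₂, hΦ₂, hexp₂, hper₂⟩ := h₂
  refine ⟨fun t ↦ Φ₁ t + Φ₂ t, hΦ₁.add hΦ₂, fun t ↦ by rw [exp_add, hexp₁, hexp₂], fun t ↦ ?_⟩
  simp only [hper₁, hper₂]
  push_cast
  ring

theorem star (h : HasWindingNumber γ k) : HasWindingNumber (fun t ↦ conj (γ t)) (-k) := by
  obtain ⟨Φ, hΦ, hexp, hper⟩ := h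
  refine ⟨fun t ↦ conj (Φ t), continuous_conj.comp hΦ,
    fun t ↦ by rw [exp_conj, hexp], fun t ↦ ?_⟩
  simp [hper, conj_ofNat]

theorem periodic (h : HasWindingNumber γ k) : Function.Periodic γ (2 * Real.pi) := by
  obtain ⟨Φ, -, hexp, hper⟩ := h
  intro t
  rw [← hexp, hper, exp_add, exp_int_mul_two_pi_mul_I, mul_one, hexp]

/-- Each transverse crossing of the real axis is half a turn, in the direction given by the side of
the origin on which it happens and by the sign of the vertical velocity. -/
theorem two_mul_eq_sum {T' : ℝ → ℝ} {Z : Finset ℝ} (h : HasWindingNumber γ k)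
    (hZ : ∀ t, t ∈ Z ↔ t ∈ Ico 0 (2 * Real.pi) ∧ (γ t).im = 0)
    (hderiv : ∀ x ∈ Z, HasDerivAt (fun t ↦ (γ t).im) (T' x) x) (hT' : ∀ x ∈ Z, T' x ≠ 0) :
    2 * k = ∑ x ∈ Z, ((SignType.sign (γ x).re * SignType.sign (T' x) : SignType) : ℤ) := by
  have hpos : (0 : ℝ) < 2 * Real.pi := Real.two_pi_pos
  obtain ⟨δ, hZδ, hδ⟩ : ∃ δ, (∀ z ∈ Z, δ < 2 * Real.pi - z) ∧ δ ∈ Ioo 0 (2 * Real.pi) :=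
    (((eventually_all_finset Z).2 fun z hz ↦ (eventually_lt_nhds
      (sub_pos.2 ((hZ z).1 hz).1.2)).filter_mono nhdsWithin_le_nhds).and
      (Ioo_mem_nhdsGT hpos)).exists (f := 𝓝[>] 0)
  have hper := h.periodic
  obtain ⟨Φ, hΦ, hexp, hΦper⟩ := h
  have hIoo : ↑Z ⊆ Ioo (-δ) (2 * Real.pi - δ) := fun z hz ↦
    ⟨(neg_lt_zero.2 hδ.1).trans_le ((hZ z).1 hz).1.1, lt_sub_comm.1 (hZδ z hz)⟩
  have hcross (t : ℝ) (ht : t ∈ Icc (-δ) (2 * Real.pi - δ)) :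
      (exp (Φ t)).im = 0 ↔ t ∈ Z := by
    refine ⟨fun h0 ↦ ?_, fun htZ ↦ by rw [hexp, ((hZ t).1 htZ).2]⟩
    rw [hexp] at h0
    rcases le_or_gt 0 t with htnonneg | htneg
    · exact (hZ t).2 ⟨⟨htnonneg, ht.2.trans_lt (sub_lt_self _ hδ.1)⟩, h0⟩
    · have hmem : t + 2 * Real.pi ∈ Z :=
        (hZ _).2 ⟨⟨by linarith [ht.1, hδ.2], by linarith⟩, by rw [hper, h0]⟩
      linarith [hZδ _ hmem, ht.1]
  have hsum := halfTurns_im_sub_eq_two_mul_sum (T' := T') hΦ (by linarith) hIoo hcross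
    (fun x hx ↦ by simpa only [hexp] using hderiv x hx) hT'
  have hturn : (Φ (2 * Real.pi - δ)).im = (Φ (-δ)).im + k * (2 * Real.pi) := by
    rw [show 2 * Real.pi - δ = -δ + 2 * Real.pi by ring, hΦper]
    simp
  rw [hturn, halfTurns_add_int_mul_two_pi] at hsum
  simp only [hexp] at hsum
  linarith

end HasWindingNumber

theorem hasWindingNumber_zero_of_eq_exp {γ L : ℝ → ℂ} (hL : Continuous L)
    (hper : Function.Periodic L (2 * Real.pi)) (hγ : ∀ t, exp (L t) = γ t) :
    HasWindingNumber γ 0 :=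
  ⟨L, hL, hγ, fun t ↦ by simp [hper t]⟩

theorem hasWindingNumber_circleMap : HasWindingNumber (circleMap 0 1) 1 :=
  ⟨fun t ↦ t * I, by fun_prop, fun t ↦ by simp [circleMap], fun t ↦ by push_cast; ring⟩

theorem hasWindingNumber_circleMap_sub {s : ℂ} (hs : ‖s‖ < 1) :
    HasWindingNumber (fun t ↦ circleMap 0 1 t - s) 1 := by
  let w (t : ℝ) : ℂ := 1 - s * conj (circleMap 0 1 t)
  have hw (t : ℝ) : w t ∈ slitPlane := by
    simpa [w, sub_eq_add_neg] using
      mem_slitPlane_of_norm_lt_one (z := -(s * conj (circleMap 0 1 t))) (by simpa using hs)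
  have hwind : HasWindingNumber w 0 :=
    hasWindingNumber_zero_of_eq_exp (L := fun t ↦ log (w t))
      ((by fun_prop : Continuous w).clog hw)
      (fun t ↦ by simp only [w, periodic_circleMap 0 1 t])
      fun t ↦ exp_log (slitPlane_ne_zero (hw t))
  have hfactor (t : ℝ) : circleMap 0 1 t * w t = circleMap 0 1 t - s := by
    have hconj : circleMap 0 1 t * conj (circleMap 0 1 t) = 1 := by simp [mul_conj']
    linear_combination (-s) * hconj
  simpa only [hfactor, add_zero] using hasWindingNumber_circleMap.mul hwind

theorem exists_continuousOn_exp_eq {K : Set ℂ} (hK : Convex ℝ K) (hne : K.Nonempty) {F : ℂ → ℂ}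
    (hF : ContinuousOn F K) (h0 : ∀ z ∈ K, F z ≠ 0) :
    ∃ L : ℂ → ℂ, ContinuousOn L K ∧ ∀ z ∈ K, exp (L z) = F z := by
  classical
  have : ContractibleSpace K := hK.contractibleSpace hne
  have : LocallyPathConnectedSpace K := hK.locallyPathConnectedSpace
  obtain ⟨z₀, hz₀⟩ := hne
  obtain ⟨L, ⟨-, hL⟩, -⟩ := isCoveringMapOn_exp.existsUnique_continuousMap_lifts
    ⟨K.domRestrict F, continuousOn_iff_continuous_domRestrict.1 hF⟩ (a₀ := ⟨z₀, hz₀⟩)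
    (exp_log (h0 z₀ hz₀)) fun z ↦ h0 z z.2
  refine ⟨fun z ↦ if hz : z ∈ K then L ⟨z, hz⟩ else 0, ?_, fun z hz ↦ ?_⟩
  · rw [continuousOn_iff_continuous_domRestrict]
    convert! map_continuous L with z
    simp
  · simpa [hz] using congrFun hL ⟨z, hz⟩

theorem hasWindingNumber_zero_of_forall_ne_zero {F : ℂ → ℂ}
    (hF : ContinuousOn F (Metric.closedBall 0 1)) (h0 : ∀ z ∈ Metric.closedBall 0 1, F z ≠ 0) :
    HasWindingNumber (fun t ↦ F (circleMap 0 1 t)) 0 := by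
  obtain ⟨L, hL, hexp⟩ :=
    exists_continuousOn_exp_eq (convex_closedBall 0 1) ⟨0, by simp⟩ hF h0
  have hmem (t : ℝ) : circleMap 0 1 t ∈ Metric.closedBall (0 : ℂ) 1 :=
    circleMap_mem_closedBall 0 zero_le_one t
  exact hasWindingNumber_zero_of_eq_exp (hL.comp_continuous (continuous_circleMap 0 1) hmem)
    ((periodic_circleMap 0 1).comp L) fun t ↦ hexp _ (hmem t)

end WindingNumber

section PlanarLinearMaps

open Complex ComplexConjugate Filter Set
open scoped Topology

/-- The coefficient of `w` in the expansion `A w = a * w + b * conj w` of a real-linear map. -/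
def holPart (A : ℂ →L[ℝ] ℂ) : ℂ := (A 1 - I * A I) / 2

/-- The coefficient of `conj w` in the expansion `A w = a * w + b * conj w` of a real-linear map. -/
def antiholPart (A : ℂ →L[ℝ] ℂ) : ℂ := (A 1 + I * A I) / 2

theorem apply_eq_holPart_mul_add_antiholPart_mul_conj (A : ℂ →L[ℝ] ℂ) (w : ℂ) :
    A w = holPart A * w + antiholPart A * conj w := by
  have hw : A w = w.re * A 1 + w.im * A I := by
    conv_lhs => rw [← re_add_im w, ← mul_one (w.re : ℂ)]
    simp only [← real_smul, map_add, map_smul]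
  have hconj : conj w = w.re - w.im * I := by apply Complex.ext <;> simp
  rw [hw, hconj, holPart, antiholPart]
  linear_combination (A 1 - I * A I) / 2 * re_add_im w + (w.im * A I) * I_sq

theorem det_eq_norm_holPart_sq_sub (A : ℂ →L[ℝ] ℂ) :
    A.det = ‖holPart A‖ ^ 2 - ‖antiholPart A‖ ^ 2 := by
  have hdet : A.det = (A 1).re * (A I).im - (A I).re * (A 1).im := by
    rw [ContinuousLinearMap.det, ← LinearMap.det_toMatrix basisOneI, Matrix.det_fin_two]
    simp [LinearMap.toMatrix_apply]
  rw [hdet, ← normSq_eq_norm_sq, ← normSq_eq_norm_sq]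
  simp only [normSq_apply, holPart, antiholPart]
  simp
  ring

theorem det_smul_eq (c : ℂ) (A : ℂ →L[ℝ] ℂ) : (c • A).det = ‖c‖ ^ 2 * A.det := by
  have hhol : holPart (c • A) = c * holPart A := by
    simp only [holPart, smul_apply, smul_eq_mul]
    ring
  have hanti : antiholPart (c • A) = c * antiholPart A := by
    simp only [antiholPart, smul_apply, smul_eq_mul]
    ring
  rw [det_eq_norm_holPart_sq_sub, det_eq_norm_holPart_sq_sub, hhol, hanti, norm_mul, norm_mul]
  ring

theorem sign_det_smul {c : ℂ} (hc : c ≠ 0) (A : ℂ →L[ℝ] ℂ) :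
    SignType.sign (c • A).det = SignType.sign A.det := by
  rw [det_smul_eq, sign_mul, sign_pos (pow_pos (norm_pos_iff.2 hc) 2), one_mul]

end PlanarLinearMaps

section Index

open Complex ComplexConjugate Filter Set Metric
open scoped Topology

theorem eventually_norm_div_sub_lt {F : ℂ → ℂ} {A : ℂ →L[ℝ] ℂ} {s a b : ℂ} {p q : ℂ ≃ₗᵢ[ℝ] ℂ}
    (hF : HasFDerivAt F A s) (hs : F s = 0) (hA : ∀ w, A w = a * p w + b * q w)
    (hab : ‖b‖ < ‖a‖) :
    ∀ᶠ z in 𝓝[≠] s, ‖F z / p (z - s) - a‖ < ‖a‖ := by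
  filter_upwards [(hF.isLittleO.def (half_pos (sub_pos.2 hab))).filter_mono nhdsWithin_le_nhds,
    self_mem_nhdsWithin] with z hz hzs
  have hpos : 0 < ‖z - s‖ := norm_pos_iff.2 (sub_ne_zero.2 hzs)
  have hp0 : p (z - s) ≠ 0 := by simpa [sub_eq_zero] using hzs
  have hrem : ‖F z - p (z - s) * a - b * q (z - s)‖ ≤ (‖a‖ - ‖b‖) / 2 * ‖z - s‖ := by
    rw [hs, sub_zero, hA] at hz
    rwa [sub_sub, mul_comm _ a]
  rw [div_sub' hp0, norm_div, p.norm_map, div_lt_iff₀ hpos]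
  calc ‖F z - p (z - s) * a‖
      ≤ ‖F z - p (z - s) * a - b * q (z - s)‖ + ‖b * q (z - s)‖ := norm_le_norm_sub_add _ _
    _ ≤ (‖a‖ - ‖b‖) / 2 * ‖z - s‖ + ‖b‖ * ‖z - s‖ := by rw [norm_mul, q.norm_map]; gcongr
    _ < ‖a‖ * ‖z - s‖ := by nlinarith

theorem exists_continuous_zero_eventually_one {X : Type*} [TopologicalSpace X] [T4Space X]
    {U C : Set X} {s : X} (hU : U ∈ 𝓝 s) (hC : IsClosed C) (hsC : s ∉ C) :
    ∃ w : C(X, ℝ), w s = 0 ∧ (∀ z, w z ∈ Icc 0 1) ∧ (∀ z ∉ U, w z = 1) ∧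
      ∀ᶠ z in 𝓝ˢ C, w z = 1 := by
  obtain ⟨V, ⟨hVs, hV⟩, hVsub⟩ := (closed_nhds_basis s).mem_iff.1
    (inter_mem hU (hC.isOpen_compl.mem_nhds hsC))
  obtain ⟨w, hw0, hw1, hw⟩ := exists_continuous_zero_one_of_isClosed
    (isClosed_singleton (x := s)) isOpen_interior.isClosed_compl
    (disjoint_singleton_left.2 fun h ↦ h (mem_interior_iff_mem_nhds.2 hVs))
  have hw1V (z : X) (hz : z ∉ V) : w z = 1 := hw1 fun h ↦ hz (interior_subset h)
  refine ⟨w, hw0 rfl, hw, fun z hz ↦ hw1V z fun h ↦ hz (hVsub h).1, ?_⟩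
  exact mem_of_superset (hV.isOpen_compl.mem_nhdsSet.2 fun z hz h ↦ (hVsub h).2 hz) hw1V

theorem exists_continuousOn_eventuallyEq_ne_zero {X E : Type*} [TopologicalSpace X] [T4Space X]
    [NormedAddCommGroup E] [NormedSpace ℝ E] {D C : Set X} {s : X} {h : X → E} {a : E}
    (hcont : ContinuousOn h (D \ {s})) (ha : a ≠ 0)
    (hnear : ∀ᶠ z in 𝓝[≠] s, ‖h z - a‖ < ‖a‖) (hC : IsClosed C) (hsC : s ∉ C) :
    ∃ G : X → E, ContinuousOn G D ∧ (∀ᶠ z in 𝓝ˢ C, G z = h z) ∧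
      ∀ z, z = s ∨ h z ≠ 0 → G z ≠ 0 := by
  obtain ⟨w, hws, hw, hwU, hwC⟩ := exists_continuous_zero_eventually_one
    (eventually_nhdsWithin_iff.1 hnear) hC hsC
  have hbound (z : X) (hz : z ≠ s → ‖h z - a‖ < ‖a‖) : ‖w z • (h z - a)‖ ≤ w z * ‖a‖ := by
    rcases eq_or_ne z s with rfl | hzs
    · simp [hws]
    · rw [norm_smul, Real.norm_of_nonneg (hw z).1]
      exact mul_le_mul_of_nonneg_left (hz hzs).le (hw z).1
  refine ⟨fun z ↦ a + w z • (h z - a), fun z hz ↦ ?_, ?_, fun z hz hGz ↦ ?_⟩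
  · rcases eq_or_ne z s with rfl | hzs
    · have hw0 : Tendsto (fun x ↦ w x * ‖a‖) (𝓝 z) (𝓝 0) := by
        simpa [hws] using (w.continuous.tendsto z).mul_const ‖a‖
      have hlim : Tendsto (fun x ↦ w x • (h x - a)) (𝓝 z) (𝓝 0) :=
        squeeze_zero_norm' ((eventually_nhdsWithin_iff.1 hnear).mono hbound) hw0
      simpa [ContinuousWithinAt, hws] using (hlim.const_add a).mono_left nhdsWithin_le_nhds
    · have hcontz : ContinuousWithinAt h D z :=
        (hcont z ⟨hz, hzs⟩).mono_of_mem_nhdsWithin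
          (inter_mem self_mem_nhdsWithin (mem_nhdsWithin_of_mem_nhds (isOpen_ne.mem_nhds hzs)))
      exact continuousWithinAt_const.add
        (w.continuous.continuousWithinAt.smul (hcontz.sub continuousWithinAt_const))
  · filter_upwards [hwC] with z hz
    rw [hz, one_smul, add_sub_cancel]
  · replace hGz : a + w z • (h z - a) = 0 := hGz
    rcases (hw z).2.lt_or_eq with hlt | heq
    · have hle : ‖a‖ ≤ w z * ‖a‖ := calc
        ‖a‖ = ‖w z • (h z - a)‖ := by rw [eq_neg_of_add_eq_zero_right hGz, norm_neg]
        _ ≤ w z * ‖a‖ := hbound z (not_imp_comm.1 (hwU z) hlt.ne)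
      exact hle.not_gt (mul_lt_of_lt_one_left (norm_pos_iff.2 ha) hlt)
    · rw [heq, one_smul, add_sub_cancel] at hGz
      rcases hz with rfl | hz
      · exact one_ne_zero (heq.symm.trans hws)
      · exact hz hGz

theorem exists_linearIsometryEquiv_norm_div_sub_lt {F : ℂ → ℂ} {A : ℂ →L[ℝ] ℂ} {s : ℂ}
    (hF : HasFDerivAt F A s) (hs : F s = 0) (hA : A.det ≠ 0) :
    ∃ p : ℂ ≃ₗᵢ[ℝ] ℂ, (∀ r ∈ ball 0 1,
        HasWindingNumber (fun t ↦ p (circleMap 0 1 t - r)) (SignType.sign A.det)) ∧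
      ∃ a ≠ 0, ∀ᶠ z in 𝓝[≠] s, ‖F z / p (z - s) - a‖ < ‖a‖ := by
  have hnorm : A.det = ‖holPart A‖ ^ 2 - ‖antiholPart A‖ ^ 2 := det_eq_norm_holPart_sq_sub A
  rcases hA.lt_or_gt with hneg | hpos
  · have hlt : ‖holPart A‖ < ‖antiholPart A‖ :=
      lt_of_pow_lt_pow_left₀ 2 (norm_nonneg _) (by linarith)
    refine ⟨conjLIE, fun r hr ↦ ?_, antiholPart A, norm_pos_iff.1 ((norm_nonneg _).trans_lt hlt),
      eventually_norm_div_sub_lt (q := .refl ℝ ℂ) hF hs (fun w ↦ ?_) hlt⟩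
    · rw [sign_neg hneg]
      exact (hasWindingNumber_circleMap_sub (mem_ball_zero_iff.1 hr)).star
    · rw [apply_eq_holPart_mul_add_antiholPart_mul_conj, add_comm]
      rfl
  · have hlt : ‖antiholPart A‖ < ‖holPart A‖ :=
      lt_of_pow_lt_pow_left₀ 2 (norm_nonneg _) (by linarith)
    refine ⟨.refl ℝ ℂ, fun r hr ↦ ?_, holPart A, norm_pos_iff.1 ((norm_nonneg _).trans_lt hlt),
      eventually_norm_div_sub_lt (q := conjLIE) hF hs
        (apply_eq_holPart_mul_add_antiholPart_mul_conj A) hlt⟩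
    rw [sign_pos hpos]
    exact hasWindingNumber_circleMap_sub (mem_ball_zero_iff.1 hr)

/-- Dividing by `z - s` or by its conjugate, according to the orientation, removes a nondegenerate
zero `s` up to a modification near `s`. -/
theorem exists_eventuallyEq_div_of_det_ne_zero {D C : Set ℂ} {F : ℂ → ℂ} {A : ℂ →L[ℝ] ℂ} {s : ℂ}
    (hcont : ContinuousOn F D) (hF : HasFDerivAt F A s) (hs : F s = 0) (hA : A.det ≠ 0)
    (hC : IsClosed C) (hsC : s ∉ C) :
    ∃ p : ℂ ≃ₗᵢ[ℝ] ℂ, (∀ r ∈ ball 0 1,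
        HasWindingNumber (fun t ↦ p (circleMap 0 1 t - r)) (SignType.sign A.det)) ∧
      ∃ G : ℂ → ℂ, ContinuousOn G D ∧ (∀ᶠ z in 𝓝ˢ C, G z = F z / p (z - s)) ∧
        ∀ z, z = s ∨ F z ≠ 0 → G z ≠ 0 := by
  obtain ⟨p, hwind, a, ha, hnear⟩ := exists_linearIsometryEquiv_norm_div_sub_lt hF hs hA
  have hp0 (z : ℂ) (hz : z ≠ s) : p (z - s) ≠ 0 := by simpa [sub_eq_zero] using hz
  have hquot : ContinuousOn (fun z ↦ F z / p (z - s)) (D \ {s}) :=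
    (hcont.mono sdiff_subset).div (by fun_prop) fun z hz ↦ hp0 z hz.2
  obtain ⟨G, hG, hGC, hG0⟩ := exists_continuousOn_eventuallyEq_ne_zero hquot ha hnear hC hsC
  refine ⟨p, hwind, G, hG, hGC, fun z hz ↦ hG0 z ?_⟩
  rcases eq_or_ne z s with hzs | hzs
  · exact Or.inl hzs
  · exact Or.inr (div_ne_zero (hz.resolve_left hzs) (hp0 z hzs))

theorem hasFDerivAt_div_of_eq_zero {F p : ℂ → ℂ} {A : ℂ →L[ℝ] ℂ} {t : ℂ}
    (hF : HasFDerivAt F A t) (hFt : F t = 0) (hp : DifferentiableAt ℝ p t) (hpt : p t ≠ 0) :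
    HasFDerivAt (fun z ↦ F z / p z) ((p t)⁻¹ • A) t := by
  simpa [hFt, div_eq_mul_inv] using hF.fun_mul (hp.fun_inv hpt).hasFDerivAt

theorem exists_remove_zero {S : Finset ℂ} {s : ℂ} {F : ℂ → ℂ} {A : ℂ →L[ℝ] ℂ} {F' : ℂ → ℂ →L[ℝ] ℂ}
    (hcont : ContinuousOn F (closedBall 0 1)) (hsS : s ∉ S) (hs : s ∈ ball 0 1)
    (hS : ↑S ⊆ ball (0 : ℂ) 1) (hzero : ∀ z ∈ closedBall 0 1, F z = 0 ↔ z = s ∨ z ∈ S)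
    (hFs : HasFDerivAt F A s) (hA : A.det ≠ 0) (hFS : ∀ t ∈ S, HasFDerivAt F (F' t) t) :
    ∃ G : ℂ → ℂ, ContinuousOn G (closedBall 0 1) ∧ (∀ z ∈ closedBall 0 1, G z = 0 ↔ z ∈ S) ∧
      (∃ c : ℂ → ℂ, ∀ t ∈ S, c t ≠ 0 ∧ HasFDerivAt G (c t • F' t) t) ∧
      ∀ k, HasWindingNumber (fun t ↦ G (circleMap 0 1 t)) k →
        HasWindingNumber (fun t ↦ F (circleMap 0 1 t)) (SignType.sign A.det + k) := by
  have hsC : s ∉ (sphere 0 1 ∪ S : Set ℂ) := by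
    rintro (h | h)
    · exact (mem_ball.1 hs).ne (mem_sphere.1 h)
    · exact hsS h
  have hF0 (z : ℂ) (hz : z ∈ ball 0 1) : F z = 0 ↔ z = s ∨ z ∈ S :=
    hzero z (ball_subset_closedBall hz)
  obtain ⟨p, hp, G, hG, hGF, hG0⟩ := exists_eventuallyEq_div_of_det_ne_zero hcont hFs
    ((hF0 s hs).2 (Or.inl rfl)) hA (isClosed_sphere.union S.isClosed) hsC
  have hp0 (z : ℂ) (hz : z ∈ (sphere 0 1 ∪ S : Set ℂ)) : p (z - s) ≠ 0 := by
    simpa [sub_eq_zero] using ne_of_mem_of_not_mem hz hsC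
  have hGS (t : ℂ) (ht : t ∈ S) : G =ᶠ[𝓝 t] fun z ↦ F z / p (z - s) :=
    eventually_nhdsSet_iff_forall.1 hGF t (Or.inr ht)
  have hFS0 (t : ℂ) (ht : t ∈ S) : F t = 0 := (hF0 t (hS ht)).2 (Or.inr ht)
  refine ⟨G, hG, fun z hz ↦ ⟨fun hGz ↦ ?_, fun hzS ↦ ?_⟩, ⟨fun t ↦ (p (t - s))⁻¹, fun t ht ↦
    ⟨inv_ne_zero (hp0 t (Or.inr ht)), ?_⟩⟩, fun k hk ↦ ?_⟩
  · by_contra hzS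
    refine hG0 z (or_iff_not_imp_left.2 fun hzs hFz ↦ ?_) hGz
    exact ((hzero z hz).1 hFz).elim hzs hzS
  · rw [(hGS z hzS).eq_of_nhds, hFS0 z hzS, zero_div]
  · exact (hasFDerivAt_div_of_eq_zero (p := fun z ↦ p (z - s)) (hFS t ht) (hFS0 t ht)
      (by fun_prop) (hp0 t (Or.inr ht))).congr_of_eventuallyEq (hGS t ht)
  · convert (hp s hs).mul hk using 2 with t
    have hcirc : circleMap 0 1 t ∈ (sphere 0 1 ∪ S : Set ℂ) :=
      Or.inl (circleMap_mem_sphere 0 zero_le_one t)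
    rw [hGF.self_of_nhdsSet _ hcirc, mul_div_cancel₀ _ (hp0 _ hcirc)]

theorem hasWindingNumber_sum_sign_det {S : Finset ℂ} {F : ℂ → ℂ} {F' : ℂ → ℂ →L[ℝ] ℂ}
    (hcont : ContinuousOn F (closedBall 0 1)) (hS : ↑S ⊆ ball (0 : ℂ) 1)
    (hzero : ∀ z ∈ closedBall 0 1, F z = 0 ↔ z ∈ S)
    (hF : ∀ s ∈ S, HasFDerivAt F (F' s) s) (hdet : ∀ s ∈ S, (F' s).det ≠ 0) :
    HasWindingNumber (fun t ↦ F (circleMap 0 1 t))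
      (∑ s ∈ S, ((SignType.sign (F' s).det : SignType) : ℤ)) := by
  induction S using Finset.induction_on generalizing F F' with
  | empty =>
    exact hasWindingNumber_zero_of_forall_ne_zero hcont fun z hz h0 ↦ by
      simpa using (hzero z hz).1 h0
  | insert s S hsS ih =>
    simp only [Finset.coe_insert, insert_subset_iff, Finset.mem_insert, forall_eq_or_imp]
      at hS hzero hF hdet
    obtain ⟨G, hG, hGzero, ⟨c, hc⟩, hwind⟩ :=
      exists_remove_zero hcont hsS hS.1 hS.2 hzero hF.1 hdet.1 hF.2
    have hsign (t : ℂ) (ht : t ∈ S) : SignType.sign (c t • F' t).det = SignType.sign (F' t).det :=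
      sign_det_smul (hc t ht).1 _
    have hGwind := ih hG hS.2 hGzero (fun t ht ↦ (hc t ht).2) fun t ht ↦ by
      rw [← sign_ne_zero, hsign t ht, sign_ne_zero]
      exact hdet.2 t ht
    rw [Finset.sum_congr rfl fun t ht ↦ by rw [hsign t ht]] at hGwind
    rw [Finset.sum_insert hsS]
    exact hwind _ hGwind

end Index

section Gradient

open InnerProductSpace
open scoped Gradient

variable {E F : Type*} [NormedAddCommGroup E] [InnerProductSpace ℝ E] [CompleteSpace E]
  [NormedAddCommGroup F] [InnerProductSpace ℝ F] [CompleteSpace F]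

/-- The inverse of the Riesz isomorphism of a real Hilbert space, as a linear equivalence; the
library states it as a conjugate-linear one. -/
def rieszSymm (E : Type*) [NormedAddCommGroup E] [InnerProductSpace ℝ E] [CompleteSpace E] :
    StrongDual ℝ E ≃L[ℝ] E :=
  (toDual ℝ E).symm.toContinuousLinearEquiv

theorem gradient_eq_rieszSymm_comp_fderiv (f : E → ℝ) : ∇ f = rieszSymm E ∘ fderiv ℝ f := rfl

theorem gradient_eq_zero_iff {f : E → ℝ} {x : E} : ∇ f x = 0 ↔ fderiv ℝ f x = 0 :=
  (rieszSymm E).map_eq_zero_iff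

theorem differentiable_gradient {f : E → ℝ} (hf : ContDiff ℝ 2 f) : Differentiable ℝ (∇ f) :=
  (rieszSymm E).differentiable.comp
    ((hf.fderiv_right (m := 1) le_rfl).differentiable one_ne_zero)

theorem det_fderiv_gradient_ne_zero [FiniteDimensional ℝ E] {f : E → ℝ} {x : E}
    (hf : Function.Injective (fderiv ℝ (fderiv ℝ f) x)) : (fderiv ℝ (∇ f) x).det ≠ 0 := by
  rw [gradient_eq_rieszSymm_comp_fderiv, ContinuousLinearEquiv.comp_fderiv]
  exact fun h ↦ LinearMap.det_eq_zero_iff_ker_ne_bot.1 h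
    (LinearMap.ker_eq_bot.2 ((rieszSymm E).injective.comp hf))

theorem gradient_comp_linearIsometryEquiv (e : E ≃ₗᵢ[ℝ] F) (f : F → ℝ) :
    ∇ (f ∘ e) = e.symm ∘ ∇ f ∘ e := by
  funext x
  refine ext_inner_right ℝ fun v ↦ ?_
  have hfderiv : fderiv ℝ (f ∘ e) x = fderiv ℝ f (e x) ∘L (e : E →L[ℝ] F) :=
    e.toContinuousLinearEquiv.comp_right_fderiv
  rw [inner_gradient_left, hfderiv, Function.comp_apply, Function.comp_apply,
    LinearIsometryEquiv.inner_map_eq_flip, LinearIsometryEquiv.symm_symm, inner_gradient_left]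
  rfl

theorem det_fderiv_gradient_comp_linearIsometryEquiv (e : E ≃ₗᵢ[ℝ] F) (f : F → ℝ) (x : E) :
    (fderiv ℝ (∇ (f ∘ e)) x).det = (fderiv ℝ (∇ f) (e x)).det := by
  have hfderiv : fderiv ℝ (e.symm ∘ ∇ f ∘ e) x =
      (e.symm : F →L[ℝ] E) ∘L fderiv ℝ (∇ f) (e x) ∘L (e : E →L[ℝ] F) := by
    rw [e.symm.comp_fderiv]
    congr 1
    exact e.toContinuousLinearEquiv.comp_right_fderiv
  rw [gradient_comp_linearIsometryEquiv, hfderiv]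
  exact LinearMap.det_conj (fderiv ℝ (∇ f) (e x) : F →ₗ[ℝ] F) e.symm.toLinearEquiv

end Gradient

section SignSums

variable {ι : Type*}

theorem natAbs_sum_signType_le_card (S : Finset ι) (d : ι → SignType) :
    (∑ i ∈ S, (d i : ℤ)).natAbs ≤ S.card := by
  have hle (x : SignType) : (x : ℤ).natAbs ≤ 1 := by decide +revert
  simpa using (Int.natAbs_sum_le S _).trans (Finset.sum_le_card_nsmul S _ 1 fun i _ ↦ hle (d i))

theorem card_modEq_sum_signType {S : Finset ι} {d : ι → SignType} (hd : ∀ i ∈ S, d i ≠ 0) :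
    S.card ≡ ∑ i ∈ S, (d i : ℤ) [ZMOD 2] := by
  have hodd (x : SignType) (hx : x ≠ 0) : 1 ≡ x [ZMOD 2] := by decide +revert
  rw [Finset.cast_card]
  exact Int.ModEq.sum fun i hi ↦ hodd (d i) (hd i hi)

end SignSums

section MorseFormula

open Complex ComplexConjugate Metric Set
open scoped Gradient

theorem conj_mul_re_eq_inner (z w : ℂ) : (conj z * w).re = ⟪w, z⟫ := by
  rw [Complex.inner, ← conj_re (z * _), map_mul, conj_conj]

theorem conj_mul_im_eq_inner (z w : ℂ) : (conj z * w).im = ⟪w, z * I⟫ := by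
  rw [Complex.inner]
  simp
  ring

theorem hasDerivAt_comp_circleMap {h : ℂ → ℝ} {t : ℝ}
    (hh : DifferentiableAt ℝ h (circleMap 0 1 t)) :
    HasDerivAt (fun t ↦ h (circleMap 0 1 t))
      (conj (circleMap 0 1 t) * ∇ h (circleMap 0 1 t)).im t := by
  rw [conj_mul_im_eq_inner, inner_gradient_left]
  exact hh.hasFDerivAt.comp_hasDerivAt t (hasDerivAt_circleMap 0 1 t)

theorem two_mul_sum_sign_det_sub_one_eq_sum {h : ℂ → ℝ} {g : ℝ → ℝ} {S : Finset ℂ} {Z : Finset ℝ}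
    (hh : ContDiff ℝ 2 h) (hg : ∀ t, h (circleMap 0 1 t) = g t) (hS : ↑S ⊆ ball (0 : ℂ) 1)
    (hcrit : ∀ z ∈ closedBall 0 1, ∇ h z = 0 ↔ z ∈ S)
    (hdet : ∀ s ∈ S, (fderiv ℝ (∇ h) s).det ≠ 0)
    (hZ : ∀ t, t ∈ Z ↔ t ∈ Ico 0 (2 * Real.pi) ∧ deriv g t = 0)
    (hZ' : ∀ t ∈ Z, deriv (deriv g) t ≠ 0) :
    2 * (∑ s ∈ S, ((SignType.sign (fderiv ℝ (∇ h) s).det : SignType) : ℤ) - 1) =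
      ∑ t ∈ Z, ((SignType.sign ⟪∇ h (circleMap 0 1 t), circleMap 0 1 t⟫ *
        SignType.sign (deriv (deriv g) t) : SignType) : ℤ) := by
  have hgradDiff : Differentiable ℝ (∇ h) := differentiable_gradient hh
  have hgrad := hasWindingNumber_sum_sign_det hgradDiff.continuous.continuousOn hS hcrit
    (fun s _ ↦ (hgradDiff s).hasFDerivAt) hdet
  have hderiv : deriv g = fun t ↦ (conj (circleMap 0 1 t) * ∇ h (circleMap 0 1 t)).im := by
    funext t
    rw [← (hasDerivAt_comp_circleMap (hh.differentiable two_ne_zero _)).deriv]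
    simp only [hg]
  have hpolar := hasWindingNumber_circleMap.star.mul hgrad
  have hcross := hpolar.two_mul_eq_sum (T' := deriv (deriv g)) (Z := Z)
    (fun t ↦ by rw [hZ, hderiv])
    (fun t ht ↦ hderiv ▸ (differentiableAt_of_deriv_ne_zero (hZ' t ht)).hasDerivAt) hZ'
  rw [sub_eq_neg_add, hcross]
  simp only [conj_mul_re_eq_inner]

end MorseFormula

section Extension

open Complex Metric Set
open scoped Gradient

theorem sphPt_eq (t : ℝ) : sphPt t = orthonormalBasisOneI.repr (circleMap 0 1 t) := by
  ext i
  fin_cases i <;> simp [sphPt, circleMap, exp_ofReal_mul_I_re, exp_ofReal_mul_I_im]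

theorem two_mul_sum_sign_det_sub_one_eq_sum_sphPt {f : E2 → ℝ} {g : ℝ → ℝ} {S : Finset E2}
    {Z : Finset ℝ} (hf : ContDiff ℝ 2 f) (hg : ∀ t, f (sphPt t) = g t)
    (hS : ↑S ⊆ ball (0 : E2) 1) (hcrit : ∀ x ∈ closedBall 0 1, ∇ f x = 0 ↔ x ∈ S)
    (hdet : ∀ s ∈ S, (fderiv ℝ (∇ f) s).det ≠ 0)
    (hZ : ∀ t, t ∈ Z ↔ t ∈ Ico 0 (2 * Real.pi) ∧ deriv g t = 0)
    (hZ' : ∀ t ∈ Z, deriv (deriv g) t ≠ 0) :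
    2 * (∑ s ∈ S, ((SignType.sign (fderiv ℝ (∇ f) s).det : SignType) : ℤ) - 1) =
      ∑ t ∈ Z, ((SignType.sign ⟪∇ f (sphPt t), sphPt t⟫ *
        SignType.sign (deriv (deriv g) t) : SignType) : ℤ) := by
  let e : ℂ ≃ₗᵢ[ℝ] E2 := orthonormalBasisOneI.repr
  have hgrad (z : ℂ) : ∇ (f ∘ e) z = e.symm (∇ f (e z)) :=
    congrFun (gradient_comp_linearIsometryEquiv e f) z
  have hmem (z : ℂ) : z ∈ S.map e.symm.toEquiv.toEmbedding ↔ e z ∈ S := by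
    simp [Finset.mem_map_equiv]
  have hmorse := two_mul_sum_sign_det_sub_one_eq_sum (h := f ∘ e)
    (S := S.map e.symm.toEquiv.toEmbedding) (hf.comp e.contDiff)
    (fun t ↦ by rw [Function.comp_apply, ← sphPt_eq, hg])
    (fun z hz ↦ by simpa using hS ((hmem z).1 hz))
    (fun z hz ↦ by rw [hmem, ← hcrit (e z) (by simpa using hz), hgrad, e.symm.map_eq_zero_iff])
    (fun z hz ↦ by
      rw [det_fderiv_gradient_comp_linearIsometryEquiv]
      exact hdet (e z) ((hmem z).1 hz)) hZ hZ'
  simpa [det_fderiv_gradient_comp_linearIsometryEquiv, hgrad, sphPt_eq,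
    LinearIsometryEquiv.inner_map_eq_flip] using hmorse

variable {n : ℕ} {a : Ribbon n} {f : E2 → ℝ}

theorem IsExtension.sign_radial_mul_sign_deriv (hf : IsExtension a f) (i : Fin n) :
    ((SignType.sign ⟪∇ f (sphPt (a.θ i)), sphPt (a.θ i)⟫ *
      SignType.sign (deriv (deriv a.g) (a.θ i)) : SignType) : ℤ) = -a.ν i := by
  obtain ⟨-, -, -, hrad⟩ := hf
  have hsign : SignType.sign ((a.ν i : ℝ) * ⟪∇ f (sphPt (a.θ i)), sphPt (a.θ i)⟫) =
      -SignType.sign (deriv (deriv a.g) (a.θ i)) := by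
    rcases (a.node_nondeg i).lt_or_gt with hmax | hmin
    · rw [sign_pos ((hrad i).1 hmax), sign_neg hmax, neg_neg]
    · rw [sign_neg ((hrad i).2 hmin), sign_pos hmin]
  have hsq := (sign_mul _ _).symm.trans (sign_pos (mul_self_pos.2 (a.node_nondeg i)))
  rcases a.nu_sign i with hν | hν
  · rw [hν, Int.cast_one, one_mul] at hsign
    rw [hsign, neg_mul, hsq, hν, SignType.coe_neg_one]
  · rw [hν, Int.cast_neg, Int.cast_one, neg_one_mul, Left.sign_neg, neg_inj] at hsign
    rw [hsign, hsq, hν, neg_neg, SignType.coe_one]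

theorem IsExtension.gradient_eq_zero_iff_mem_critPts (hf : IsExtension a f) {x : E2}
    (hx : x ∈ closedBall 0 1) : ∇ f x = 0 ↔ x ∈ critPts f := by
  rw [gradient_eq_zero_iff]
  refine ⟨fun h ↦ ⟨?_, h⟩, And.right⟩
  exact mem_ball.2 (hx.lt_of_ne fun hs ↦ hf.2.2.1 x hs h)

theorem IsExtension.sigma_eq (hf : IsExtension a f) (hfin : (critPts f).Finite)
    (hdet : ∀ x ∈ critPts f, (fderiv ℝ (∇ f) x).det ≠ 0) :
    a.sigma =
      2 * (1 - ∑ x ∈ hfin.toFinset, ((SignType.sign (fderiv ℝ (∇ f) x).det : SignType) : ℤ)) := by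
  have hZ (t : ℝ) : t ∈ Finset.univ.map ⟨a.θ, a.theta_mono.injective⟩ ↔
      t ∈ Ico 0 (2 * Real.pi) ∧ deriv a.g t = 0 := by
    simp only [Finset.mem_map, Finset.mem_univ, true_and, Function.Embedding.coeFn_mk]
    refine ⟨?_, fun ⟨ht, h0⟩ ↦ (a.crit_only t ht h0).imp fun i hi ↦ hi.symm⟩
    rintro ⟨i, rfl⟩
    exact ⟨a.theta_mem i, a.node_crit i⟩
  have hmorse := two_mul_sum_sign_det_sub_one_eq_sum_sphPt (contDiff_infty.1 hf.1 2) hf.2.1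
    (S := hfin.toFinset) (fun x hx ↦ (hfin.mem_toFinset.1 hx).1)
    (fun x hx ↦ by rw [hfin.mem_toFinset, hf.gradient_eq_zero_iff_mem_critPts hx])
    (fun x hx ↦ hdet x (hfin.mem_toFinset.1 hx)) hZ (by simpa using a.node_nondeg)
  simp only [Finset.sum_map, Function.Embedding.coeFn_mk, hf.sign_radial_mul_sign_deriv,
    Finset.sum_neg_distrib] at hmorse
  rw [Ribbon.sigma]
  linarith

end Extension

/-- If `f` is an extension of a ribbon `a` with signature `σ` all of whose critical points in
the open unit disk are nondegenerate (invertible Hessian), with exactly `m` critical points,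
`m` finite, then `m ≥ |1 − σ/2|` and `m ≡ 1 − σ/2 (mod 2)`. -/
theorem stmt_9 (n : ℕ) (a : Ribbon n) (f : E2 → ℝ) (hf : IsExtension a f)
    (hnd : ∀ x ∈ critPts f, Function.Bijective (fderiv ℝ (fderiv ℝ f) x))
    (m : ℕ) (hm : (critPts f).encard = (m : ℕ∞)) :
    (1 - a.sigma / 2).natAbs ≤ m ∧ Int.ModEq 2 (m : ℤ) (1 - a.sigma / 2) := by
  have hfin : (critPts f).Finite := Set.finite_of_encard_eq_coe hm
  have hcard : hfin.toFinset.card = m := by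
    rwa [hfin.encard_eq_coe_toFinset_card, Nat.cast_inj] at hm
  have hdet (x : E2) (hx : x ∈ critPts f) : (fderiv ℝ (gradient f) x).det ≠ 0 :=
    det_fderiv_gradient_ne_zero (hnd x hx).injective
  have hindex : 1 - a.sigma / 2 =
      ∑ x ∈ hfin.toFinset, ((SignType.sign (fderiv ℝ (gradient f) x).det : SignType) : ℤ) := by
    rw [hf.sigma_eq hfin hdet, Int.mul_ediv_cancel_left _ two_ne_zero, sub_sub_cancel]
  rw [hindex, ← hcard]
  exact ⟨natAbs_sum_signType_le_card _ _, card_modEq_sum_signType fun x hx ↦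
    sign_ne_zero.2 (hdet x (hfin.mem_toFinset.1 hx))⟩
end
end
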